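/- arXiv:2309.05864 — 2 statements merged into one kernel-verified Lean document; each statement's English description precedes it below -/
import Mathlib

section
/- Let A be a 2×n integer matrix of rank 2 with nonzero columns a₁,…,aₙ ∈ ℤ² such that ℕA is pointed and ℤA = ℤ², and let b₁ and b₂ be columns of A lying on the two extreme rays of the rational cone ℚ_{≥0}A. Then the semigroup ring ℂ[ℕA] ≅ ℂ[∂₁,…,∂ₙ]/I_A is Cohen–Macaulay if and only if (ℕA − ℕb₁) ∩ (ℕA − ℕb₂) = ℕA, where the difference sets and the intersection are taken inside ℤ². -/
/-!
Write `S = ℕA` and `x = t^{b₁}`, `y = t^{b₂}`. The proof works inside the Laurent polynomial ring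
`ℂ[ℤ²]`, into which `ℂ[∂]/I_A` embeds with image spanned by the monomials `t^c`, `c ∈ S`
(`isSemigroupRing_toricEmb`). Since `b₁, b₂` span the cone of `S`, some power of each `t^c` is a
monomial in `x` and `y` (`ConeData.mon_pow`). Depth, which is defined by the vanishing of `Ext`, is
translated into the existence of regular sequences by Rees' theorem (`le_ringDepth_iff`).

Suppose that `(S - ℕb₁) ∩ (S - ℕb₂) = S`. Every `c ∈ S` can be written `s + i b₁ + j b₂` with
`s ∈ S` such that `s - b₁, s - b₂ ∉ S`, and the hypothesis on `S` makes this decomposition unique.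
Hence the semigroup ring is free over the polynomial ring `ℂ[x, y]` (`paramMap_flat`), and it is
integral over it. A prime `p` lies over a prime `q` of at least the same height; `q` contains a
regular sequence of length `2` if its height is `2`, and by flatness this sequence stays regular
upstairs (`isCohenMacaulayRing_of_flat`).

Conversely, suppose that the ring is Cohen–Macaulay. The ideal `m` of elements without constant term
has height at least `2` (`two_le_height_ker_constTerm`), so its localization has depth at least `2`.
If `c + k b₁ ∈ S` and `c + l b₂ ∈ S`, then the fraction `t^c` is multiplied into the ring by `x^k`
and `y^l`, hence by a power of every element of `m`. As the depth is at least `2`, this forces `t^c`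
to belong to the localization at `m` (`dvd_of_dvd_pow_mul`), and comparing coefficients yields
`c ∈ S` (`mem_of_isCohenMacaulayRing`).
-/

open MvPolynomial CategoryTheory

noncomputable section

/-- The set of columns of an integer matrix. -/
def cols {d n : ℕ} (A : Matrix (Fin d) (Fin n) ℤ) : Set (Fin d → ℤ) :=
  Set.range fun j i => A i j

/-- The affine semigroup `ℕA` generated by the columns of `A` is pointed. -/
def IsPointed {d n : ℕ} (A : Matrix (Fin d) (Fin n) ℤ) : Prop :=
  ∀ v ∈ AddSubmonoid.closure (cols A),
    -v ∈ AddSubmonoid.closure (cols A) → v = 0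

/-- The toric ideal `I_A ⊆ ℂ[∂₁,…,∂ₙ]`, generated by the binomials
`∂^u - ∂^v` with `Au = Av`. -/
def toricIdeal {d n : ℕ} (A : Matrix (Fin d) (Fin n) ℤ) :
    Ideal (MvPolynomial (Fin n) ℂ) :=
  Ideal.span { f | ∃ u v : Fin n →₀ ℕ,
    A.mulVec (fun j => (u j : ℤ)) = A.mulVec (fun j => (v j : ℤ)) ∧
    f = monomial u 1 - monomial v 1 }

/-- The `L`-weight of an exponent vector. -/
def wt {n : ℕ} (L : Fin n → ℚ) (u : Fin n →₀ ℕ) : ℚ := ∑ j, L j * (u j : ℚ)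

/-- The `L`-initial form of a polynomial: the sum of its terms of maximal `L`-weight. -/
def initialForm {n : ℕ} (L : Fin n → ℚ) (f : MvPolynomial (Fin n) ℂ) :
    MvPolynomial (Fin n) ℂ :=
  ∑ u ∈ f.support.filter fun u => ∀ v ∈ f.support, wt L v ≤ wt L u,
    monomial u (f.coeff u)

/-- The `L`-initial ideal `in_L(I)` of an ideal `I ⊆ ℂ[∂₁,…,∂ₙ]`. -/
def initialIdeal {n : ℕ} (L : Fin n → ℚ) (I : Ideal (MvPolynomial (Fin n) ℂ)) :
    Ideal (MvPolynomial (Fin n) ℂ) :=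
  Ideal.span { g | ∃ f ∈ I, f ≠ 0 ∧ g = initialForm L f }

/-- The depth of a Noetherian local ring `R`, i.e. `inf { i | Ext^i_R(R/m, R) ≠ 0 }`. -/
def ringDepth (R : Type) [CommRing R] [IsLocalRing R] : ℕ∞ :=
  sInf { i : ℕ∞ | ∃ m : ℕ, i = m ∧
    Nontrivial (((Ext R (ModuleCat.{0} R) m).obj
        (Opposite.op (ModuleCat.of R (R ⧸ IsLocalRing.maximalIdeal R)))).obj
      (ModuleCat.of R R)) }

/-- A commutative ring `T` is Cohen–Macaulay if for every prime ideal `p`, the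
localization `T_p` satisfies `depth = Krull dimension`. -/
def IsCohenMacaulayRing (T : Type) [CommRing T] : Prop :=
  ∀ (p : Ideal T) [p.IsPrime],
    (ringDepth (Localization.AtPrime p) : WithBot ℕ∞) =
      ringKrullDim (Localization.AtPrime p)

/-- The Euler operator `E_i = ∑ⱼ a_{ij} xⱼ ∂ⱼ` as an element of `ℂ[x,∂]`,
where `x_j = X (Sum.inl j)` and `∂_j = X (Sum.inr j)`. -/
def eulerXD {d n : ℕ} (A : Matrix (Fin d) (Fin n) ℤ) (i : Fin d) :
    MvPolynomial (Fin n ⊕ Fin n) ℂ :=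
  ∑ j, (A i j : MvPolynomial (Fin n ⊕ Fin n) ℂ) * X (Sum.inl j) * X (Sum.inr j)

/-- The inclusion `ℂ[∂] → K[∂]`, for `K` an algebra over `ℂ[x₁,…,xₙ]`
(in practice `K = ℂ(x₁,…,xₙ)`), sending `∂ⱼ` to `∂ⱼ`. -/
def toFracPoly (n : ℕ) (K : Type) [CommRing K] [Algebra (MvPolynomial (Fin n) ℂ) K] :
    MvPolynomial (Fin n) ℂ →+* MvPolynomial (Fin n) K :=
  MvPolynomial.map ((algebraMap (MvPolynomial (Fin n) ℂ) K).comp (C : ℂ →+* _))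

/-- The Euler operator `E_i = ∑ⱼ a_{ij} xⱼ ∂ⱼ` as an element of `K[∂]`
(in practice `K = ℂ(x₁,…,xₙ)`, and the `xⱼ` act as scalars). -/
def eulerFrac {d n : ℕ} (A : Matrix (Fin d) (Fin n) ℤ) (K : Type) [CommRing K]
    [Algebra (MvPolynomial (Fin n) ℂ) K] (i : Fin d) : MvPolynomial (Fin n) K :=
  ∑ j, C (algebraMap (MvPolynomial (Fin n) ℂ) K (X j)) *
    (A i j : MvPolynomial (Fin n) K) * X j

/-- The extension `in_L(I_A)·ℂ[x,∂]` of the initial ideal of the toric ideal to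
`ℂ[x,∂]`, where `x_j = X (Sum.inl j)` and `∂_j = X (Sum.inr j)`. -/
def grIdealXD {d n : ℕ} (A : Matrix (Fin d) (Fin n) ℤ) (L : Fin n → ℚ) :
    Ideal (MvPolynomial (Fin n ⊕ Fin n) ℂ) :=
  Ideal.map (rename (Sum.inr : Fin n → Fin n ⊕ Fin n)) (initialIdeal L (toricIdeal A))

/-- The extension `in_L(I_A)·K[∂]` of the initial ideal of the toric ideal to `K[∂]`
(in practice `K = ℂ(x₁,…,xₙ)`). -/
def grIdealFrac {d n : ℕ} (A : Matrix (Fin d) (Fin n) ℤ) (L : Fin n → ℚ) (K : Type)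
    [CommRing K] [Algebra (MvPolynomial (Fin n) ℂ) K] : Ideal (MvPolynomial (Fin n) K) :=
  Ideal.map (toFracPoly n K) (initialIdeal L (toricIdeal A))

/-! ### Depth and regular sequences -/

theorem exactAt_linearYonedaObj_succ {R : Type} [CommRing R] {X : ModuleCat.{0} R}
    (P : ProjectiveResolution X) (Y : ModuleCat.{0} R) (n : ℕ) :
    (P.complex.linearYonedaObj R Y).ExactAt (n + 1) ↔
      ∀ f : P.complex.X (n + 1) ⟶ Y, P.complex.d (n + 2) (n + 1) ≫ f = 0 →
        ∃ g : P.complex.X n ⟶ Y, P.complex.d (n + 1) n ≫ g = f := by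
  rw [HomologicalComplex.exactAt_iff' _ n (n + 1) (n + 2) (by simp) (by simp),
    ShortComplex.moduleCat_exact_iff]
  rfl

theorem exactAt_linearYonedaObj_zero {R : Type} [CommRing R] {X : ModuleCat.{0} R}
    (P : ProjectiveResolution X) (Y : ModuleCat.{0} R) :
    (P.complex.linearYonedaObj R Y).ExactAt 0 ↔
      ∀ f : P.complex.X 0 ⟶ Y, P.complex.d 1 0 ≫ f = 0 → f = 0 := by
  rw [HomologicalComplex.exactAt_iff' _ 0 0 1 CochainComplex.prev_nat_zero (by simp),
    ShortComplex.moduleCat_exact_iff]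
  have hd : ((P.complex.linearYonedaObj R Y).sc' 0 0 1).f = 0 :=
    (P.complex.linearYonedaObj R Y).shape 0 0 (by simp)
  constructor
  · intro h f hf
    obtain ⟨g, hg⟩ := h f hf
    rw [hd] at hg
    exact hg.symm
  · intro h f hf
    refine ⟨0, ?_⟩
    rw [map_zero]
    exact (h f hf).symm

/-- The left derived functors of `Hom` and the `Ext` groups of the derived category vanish
simultaneously: on a projective resolution both are the cohomology of the same complex. -/
theorem subsingleton_ext_iff {R : Type} [CommRing R] (X Y : ModuleCat.{0} R) (n : ℕ) :
    Subsingleton (((Ext R (ModuleCat.{0} R) n).obj (Opposite.op X)).obj Y) ↔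
      Subsingleton (Abelian.Ext X Y n) := by
  let P : ProjectiveResolution X := ProjectiveResolution.of X
  rw [← ModuleCat.isZero_iff_subsingleton, (P.isoExt (R := R) n Y).isZero_iff,
    ← HomologicalComplex.exactAt_iff_isZero_homology]
  cases n with
  | zero =>
    rw [exactAt_linearYonedaObj_zero, Abelian.Ext.addEquiv₀.subsingleton_congr]
    constructor
    · intro h
      refine subsingleton_of_forall_eq (α := P.cokernelCofork.pt ⟶ Y) 0 fun f => ?_
      have h1 := h (P.cokernelCofork.π ≫ f) (by
        have := P.cokernelCofork.condition
        exact (Category.assoc _ _ f).symm.trans (by rw [this, Limits.zero_comp]))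
      have : Epi P.cokernelCofork.π := Limits.epi_of_isColimit_cofork P.isColimitCokernelCofork
      rwa [← cancel_epi P.cokernelCofork.π, Limits.comp_zero]
    · intro h f hf
      obtain ⟨l, hl⟩ := Limits.CokernelCofork.IsColimit.desc' P.isColimitCokernelCofork f hf
      have : l = 0 := Subsingleton.elim (α := X ⟶ Y) _ _
      rw [← hl, this, Limits.comp_zero]
  | succ n =>
    rw [exactAt_linearYonedaObj_succ]
    constructor
    · intro h
      refine subsingleton_of_forall_eq 0 fun α => ?_
      obtain ⟨f, hf, rfl⟩ := P.extMk_surjective α (n + 2) rfl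
      exact (P.extMk_eq_zero_iff f _ rfl hf n rfl).2 (h f hf)
    · intro h f hf
      exact (P.extMk_eq_zero_iff f _ rfl hf n rfl).1 (Subsingleton.elim _ _)

/-- Rees' theorem, for the depth of a local ring. -/
theorem le_ringDepth_iff (R : Type) [CommRing R] [IsLocalRing R] [IsNoetherianRing R] (n : ℕ) :
    (n : ℕ∞) ≤ ringDepth R ↔ ∃ rs : List R, rs.length = n ∧
      (∀ r ∈ rs, r ∈ IsLocalRing.maximalIdeal R) ∧ RingTheory.Sequence.IsRegular R rs := by
  have hlt : IsLocalRing.maximalIdeal R • (⊤ : Submodule R (ModuleCat.of R R)) < ⊤ := by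
    rw [lt_top_iff_ne_top]
    change IsLocalRing.maximalIdeal R • (⊤ : Ideal R) ≠ ⊤
    rw [smul_eq_mul, Ideal.mul_top]
    exact Ideal.IsPrime.ne_top'
  have hsupp : Module.support R (ModuleCat.of R (R ⧸ IsLocalRing.maximalIdeal R)) =
      PrimeSpectrum.zeroLocus (IsLocalRing.maximalIdeal R) := by
    change Module.support R (R ⧸ IsLocalRing.maximalIdeal R) = _
    rw [Module.support_eq_zeroLocus, Ideal.annihilator_quotient]
  have hfin : Module.Finite R (ModuleCat.of R (R ⧸ IsLocalRing.maximalIdeal R)) :=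
    inferInstanceAs (Module.Finite R (R ⧸ IsLocalRing.maximalIdeal R))
  have hfin' : Module.Finite R (ModuleCat.of R R) := inferInstanceAs (Module.Finite R R)
  have hdepth : (n : ℕ∞) ≤ ringDepth R ↔ ∀ i < n, Subsingleton
      (Abelian.Ext (ModuleCat.of R (R ⧸ IsLocalRing.maximalIdeal R)) (ModuleCat.of R R) i) := by
    rw [ringDepth, le_sInf_iff]
    constructor
    · intro h i hi
      rw [← subsingleton_ext_iff]
      by_contra hn
      rw [not_subsingleton_iff_nontrivial] at hn
      have := h i ⟨i, rfl, hn⟩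
      exact absurd (Nat.cast_le.1 this) (by omega)
    · rintro h _ ⟨m, rfl, hm⟩
      rw [Nat.cast_le]
      by_contra hlt
      have := (subsingleton_ext_iff _ _ m).2 (h m (by omega))
      exact not_subsingleton _ this
  rw [hdepth]
  constructor
  · exact ModuleCat.exists_isRegular_of_exists_subsingleton_ext _ n _ hlt _ hsupp
  · rintro ⟨rs, rfl, hmem, hreg⟩
    exact ModuleCat.subsingleton_ext_of_exists_isRegular _ _ hsupp.le _ hlt rs hmem hreg

/-- A Noetherian local ring has depth equal to its dimension as soon as the depth is at least the
dimension. -/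
theorem ringDepth_eq_of_le (R : Type) [CommRing R] [IsLocalRing R] [IsNoetherianRing R] (n : ℕ)
    (hdim : ringKrullDim R = n) (h : (n : ℕ∞) ≤ ringDepth R) : ringDepth R = n := by
  refine le_antisymm ?_ h
  by_contra hlt
  rw [not_le] at hlt
  have h1 : ((n + 1 : ℕ) : ℕ∞) ≤ ringDepth R := by
    simpa using Order.add_one_le_of_lt hlt
  obtain ⟨rs, hlen, hmem, hreg⟩ := (le_ringDepth_iff R _).1 h1
  have h2 := ringKrullDim_add_length_eq_ringKrullDim_of_isRegular rs hreg
  have : Nontrivial (R ⧸ Ideal.ofList rs) := by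
    refine Ideal.Quotient.nontrivial_iff.2 (ne_top_of_le_ne_top
      (Ideal.IsPrime.ne_top' (I := IsLocalRing.maximalIdeal R)) (Ideal.span_le.2 hmem))
  have h3 : (0 : WithBot ℕ∞) ≤ ringKrullDim (R ⧸ Ideal.ofList rs) := ringKrullDim_nonneg_of_nontrivial
  rw [hlen, hdim] at h2
  have h4 : ((n + 1 : ℕ) : WithBot ℕ∞) ≤ (n : WithBot ℕ∞) := by
    rw [← h2]
    exact le_add_of_nonneg_left h3
  exact absurd (by exact_mod_cast h4 : n + 1 ≤ n) (by omega)

/-! ### The toric ring as a semigroup ring -/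

/-- The exponent `Au ∈ ℤᵈ` of the image of `∂^u` in the Laurent polynomial ring. -/
def toricDeg {d n : ℕ} (A : Matrix (Fin d) (Fin n) ℤ) (u : Fin n →₀ ℕ) : Fin d → ℤ :=
  A.mulVec fun j => (u j : ℤ)

/-- The map `ℂ[∂₁,…,∂ₙ] → ℂ[ℤᵈ]` sending `∂ⱼ` to `t^{aⱼ}`. -/
def toricMap {d n : ℕ} (A : Matrix (Fin d) (Fin n) ℤ) :
    MvPolynomial (Fin n) ℂ →ₐ[ℂ] AddMonoidAlgebra ℂ (Fin d → ℤ) :=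
  aeval fun j => AddMonoidAlgebra.single (fun i => A i j) 1

theorem toricDeg_eq_sum {d n : ℕ} (A : Matrix (Fin d) (Fin n) ℤ) (u : Fin n →₀ ℕ) :
    toricDeg A u = ∑ j, u j • (fun i => A i j) := by
  ext i
  simp [toricDeg, Matrix.mulVec, dotProduct, mul_comm]

theorem toricMap_monomial {d n : ℕ} (A : Matrix (Fin d) (Fin n) ℤ) (u : Fin n →₀ ℕ) (r : ℂ) :
    toricMap A (monomial u r) = AddMonoidAlgebra.single (toricDeg A u) r := by
  have h : ∀ s : Finset (Fin n), ∏ j ∈ s,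
      (AddMonoidAlgebra.single (fun i => A i j) 1 : AddMonoidAlgebra ℂ (Fin d → ℤ)) ^ u j =
        AddMonoidAlgebra.single (∑ j ∈ s, u j • (fun i => A i j)) 1 := by
    intro s
    induction s using Finset.induction_on with
    | empty => simp [AddMonoidAlgebra.one_def]
    | insert a s ha ih =>
      rw [Finset.prod_insert ha, Finset.sum_insert ha, ih, AddMonoidAlgebra.single_pow,
        AddMonoidAlgebra.single_mul_single]
      simp
  rw [toricMap, aeval_monomial, Finsupp.prod_fintype _ _ (by simp), h, toricDeg_eq_sum,
    ← Algebra.smul_def]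
  simp

theorem toricIdeal_le_ker {d n : ℕ} (A : Matrix (Fin d) (Fin n) ℤ) (f : MvPolynomial (Fin n) ℂ)
    (hf : f ∈ toricIdeal A) : toricMap A f = 0 := by
  have : toricIdeal A ≤ RingHom.ker (toricMap A) := by
    refine Ideal.span_le.2 ?_
    rintro _ ⟨u, v, huv, rfl⟩
    have huv' : toricDeg A u = toricDeg A v := huv
    simp [RingHom.mem_ker, toricMap_monomial, huv']
  exact this hf

/-- The toric ideal is the kernel of `∂ⱼ ↦ t^{aⱼ}`: choosing for every degree `c` one monomial
`∂^{σ(c)}` of degree `c` gives a linear map `ℂ[ℤᵈ] → ℂ[∂]/I_A` through which the quotient map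
factors. -/
theorem mem_toricIdeal_of_toricMap_eq_zero {d n : ℕ} (A : Matrix (Fin d) (Fin n) ℤ)
    (f : MvPolynomial (Fin n) ℂ) (hf : toricMap A f = 0) : f ∈ toricIdeal A := by
  classical
  let σ : (Fin d → ℤ) → (Fin n →₀ ℕ) := Function.invFun (toricDeg A)
  have hσ : ∀ u, toricDeg A (σ (toricDeg A u)) = toricDeg A u := fun u =>
    Function.invFun_eq ⟨u, rfl⟩
  let Ψ : ((Fin d → ℤ) →₀ ℂ) →ₗ[ℂ] MvPolynomial (Fin n) ℂ ⧸ toricIdeal A :=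
    Finsupp.linearCombination ℂ fun c => Ideal.Quotient.mk (toricIdeal A) (monomial (σ c) 1)
  have key : ∀ g : MvPolynomial (Fin n) ℂ,
      Ideal.Quotient.mk (toricIdeal A) g = Ψ (toricMap A g).coeff := by
    intro g
    induction g using MvPolynomial.induction_on' with
    | monomial u r =>
      rw [toricMap_monomial, AddMonoidAlgebra.coeff_single, Finsupp.linearCombination_single]
      have h1 : Ideal.Quotient.mk (toricIdeal A) (monomial u 1) =
          Ideal.Quotient.mk (toricIdeal A) (monomial (σ (toricDeg A u)) 1) := by
        rw [Ideal.Quotient.eq]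
        exact Ideal.subset_span ⟨u, _, (hσ u).symm, rfl⟩
      rw [← h1]
      have h2 : (monomial u r : MvPolynomial (Fin n) ℂ) = r • monomial u 1 := by
        simp [smul_monomial]
      rw [h2]
      rfl
    | add p q hp hq => rw [map_add, map_add, AddMonoidAlgebra.coeff_add, map_add, hp, hq]
  rw [← Ideal.Quotient.eq_zero_iff_mem, key, hf]
  simp

/-- `φ` identifies `T` with the semigroup ring of `S`, viewed inside the group ring `ℂ[G]`. -/
structure IsSemigroupRing {G T : Type} [AddCommGroup G] [CommRing T] [Algebra ℂ T]
    (S : AddSubmonoid G) (φ : T →ₐ[ℂ] AddMonoidAlgebra ℂ G) : Prop where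
  injective : Function.Injective φ
  mem_of_coeff_ne_zero : ∀ f c, (φ f).coeff c ≠ 0 → c ∈ S
  exists_monomial : ∀ c ∈ S, ∃ e, φ e = AddMonoidAlgebra.single c 1

/-- The induced embedding `ℂ[∂]/I_A → ℂ[ℤᵈ]`. -/
def toricEmb {d n : ℕ} (A : Matrix (Fin d) (Fin n) ℤ) :
    (MvPolynomial (Fin n) ℂ ⧸ toricIdeal A) →ₐ[ℂ] AddMonoidAlgebra ℂ (Fin d → ℤ) :=
  Ideal.Quotient.liftₐ (toricIdeal A) (toricMap A) (toricIdeal_le_ker A)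

theorem isSemigroupRing_toricEmb {d n : ℕ} (A : Matrix (Fin d) (Fin n) ℤ) :
    IsSemigroupRing (AddSubmonoid.closure (cols A)) (toricEmb A) where
  injective := by
    rw [injective_iff_map_eq_zero]
    intro f hf
    obtain ⟨f, rfl⟩ := Ideal.Quotient.mk_surjective f
    exact Ideal.Quotient.eq_zero_iff_mem.2 (mem_toricIdeal_of_toricMap_eq_zero A f hf)
  mem_of_coeff_ne_zero := by
    intro f c
    obtain ⟨f, rfl⟩ := Ideal.Quotient.mk_surjective f
    change (toricMap A f).coeff c ≠ 0 → _
    induction f using MvPolynomial.induction_on' with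
    | monomial u r =>
      rw [toricMap_monomial, AddMonoidAlgebra.coeff_single, Finsupp.single_apply]
      split_ifs with h
      · rintro -
        rw [← h, toricDeg_eq_sum]
        exact sum_mem fun j _ => nsmul_mem
          (AddSubmonoid.subset_closure (s := cols A) (Set.mem_range_self j)) _
      · simp
    | add p q hp hq =>
      rw [map_add, AddMonoidAlgebra.coeff_add, Finsupp.add_apply]
      intro h
      by_cases h1 : (toricMap A p).coeff c = 0
      · exact hq (by simpa [h1] using h)
      · exact hp h1
  exists_monomial := by
    intro c hc
    induction hc using AddSubmonoid.closure_induction with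
    | mem c hc =>
      obtain ⟨j, rfl⟩ := hc
      refine ⟨Ideal.Quotient.mk _ (X j), ?_⟩
      change toricMap A (X j) = _
      simp [toricMap]
    | zero => exact ⟨1, by simp [AddMonoidAlgebra.one_def]⟩
    | add a b _ _ ha hb =>
      obtain ⟨e, he⟩ := ha
      obtain ⟨e', he'⟩ := hb
      exact ⟨e * e', by rw [map_mul, he, he', AddMonoidAlgebra.single_mul_single, one_mul]⟩

/-! ### Coordinates on a two-dimensional cone -/

/-- `S` lies in the cone spanned by `b₁, b₂ ∈ S`, and `l₁, l₂` are `K` times the coordinates with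
respect to `b₁, b₂`, where `K` clears the denominators. -/
structure ConeData {G : Type} [AddCommGroup G] (S : AddSubmonoid G) (b₁ b₂ : G) (K : ℕ)
    (l₁ l₂ : G →+ ℤ) : Prop where
  pos : 0 < K
  mem₁ : b₁ ∈ S
  mem₂ : b₂ ∈ S
  l₁_b₁ : l₁ b₁ = K
  l₁_b₂ : l₁ b₂ = 0
  l₂_b₁ : l₂ b₁ = 0
  l₂_b₂ : l₂ b₂ = K
  l₁_nonneg : ∀ v ∈ S, 0 ≤ l₁ v
  l₂_nonneg : ∀ v ∈ S, 0 ≤ l₂ v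
  smul_eq : ∀ v, K • v = l₁ v • b₁ + l₂ v • b₂
  eq_zero : ∀ v, l₁ v = 0 → l₂ v = 0 → v = 0

/-- By Cramer's rule, with the square of `det(b₁, b₂)` as common denominator, so that the coordinates
of the columns stay nonnegative whatever the sign of the determinant. -/
theorem exists_coneData {n : ℕ} (A : Matrix (Fin 2) (Fin n) ℤ)
    (hcols : ∀ j, (fun i => A i j) ≠ 0)
    (b₁ b₂ : Fin 2 → ℤ)
    (hb₁ : ∃ j, b₁ = fun i => A i j)
    (hb₂ : ∃ j, b₂ = fun i => A i j)
    (hspan : ∀ j, ∃ q r : ℚ, 0 ≤ q ∧ 0 ≤ r ∧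
      (fun i => (A i j : ℚ)) = q • (fun i => (b₁ i : ℚ)) + r • (fun i => (b₂ i : ℚ)))
    (hrays : ¬ ∃ q : ℚ, (fun i => (b₂ i : ℚ)) = q • (fun i => (b₁ i : ℚ))) :
    ∃ (K : ℕ) (l₁ l₂ : (Fin 2 → ℤ) →+ ℤ),
      ConeData (AddSubmonoid.closure (cols A)) b₁ b₂ K l₁ l₂ := by
  have hb₁0 : b₁ ≠ 0 := by obtain ⟨j, rfl⟩ := hb₁; exact hcols j
  obtain ⟨D, hD⟩ : ∃ D, D = b₁ 0 * b₂ 1 - b₁ 1 * b₂ 0 := ⟨_, rfl⟩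
  have hD0 : D ≠ 0 := by
    intro h0
    rw [h0] at hD
    apply hrays
    have hDq : (b₁ 0 : ℚ) * b₂ 1 = b₁ 1 * b₂ 0 := by exact_mod_cast (by linarith)
    by_cases h : b₁ 0 = 0
    · have h1 : b₁ 1 ≠ 0 := fun h1 => hb₁0 (by ext i; fin_cases i <;> simp [h, h1])
      have h1q : (b₁ 1 : ℚ) ≠ 0 := by exact_mod_cast h1
      refine ⟨b₂ 1 / b₁ 1, ?_⟩
      ext i
      fin_cases i
      · simp only [Fin.zero_eta, Pi.smul_apply, smul_eq_mul]
        field_simp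
        linarith
      · simp only [Fin.mk_one, Pi.smul_apply, smul_eq_mul]
        field_simp
    · have hq : (b₁ 0 : ℚ) ≠ 0 := by exact_mod_cast h
      refine ⟨b₂ 0 / b₁ 0, ?_⟩
      ext i
      fin_cases i
      · simp only [Fin.zero_eta, Pi.smul_apply, smul_eq_mul]
        field_simp
      · simp only [Fin.mk_one, Pi.smul_apply, smul_eq_mul]
        field_simp
        linarith
  let l₁ : (Fin 2 → ℤ) →+ ℤ := AddMonoidHom.mk' (fun v => D * (v 0 * b₂ 1 - v 1 * b₂ 0)) (by
    intro a b; simp only [Pi.add_apply]; ring)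
  let l₂ : (Fin 2 → ℤ) →+ ℤ := AddMonoidHom.mk' (fun v => D * (b₁ 0 * v 1 - b₁ 1 * v 0)) (by
    intro a b; simp only [Pi.add_apply]; ring)
  have hl₁ : ∀ v, l₁ v = D * (v 0 * b₂ 1 - v 1 * b₂ 0) := fun v => rfl
  have hl₂ : ∀ v, l₂ v = D * (b₁ 0 * v 1 - b₁ 1 * v 0) := fun v => rfl
  have hK : (((D ^ 2).toNat : ℕ) : ℤ) = D ^ 2 := Int.toNat_of_nonneg (sq_nonneg D)
  have hnn : ∀ j, 0 ≤ l₁ (fun i => A i j) ∧ 0 ≤ l₂ (fun i => A i j) := by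
    intro j
    obtain ⟨q, r, hq, hr, h⟩ := hspan j
    have h0 := congrFun h 0
    have h1 := congrFun h 1
    simp only [Pi.add_apply, Pi.smul_apply, smul_eq_mul] at h0 h1
    have hDq : (D : ℚ) = b₁ 0 * b₂ 1 - b₁ 1 * b₂ 0 := by exact_mod_cast hD
    have e1 : ((l₁ fun i => A i j : ℤ) : ℚ) = q * D ^ 2 := by
      rw [hl₁]; push_cast; rw [h0, h1, hDq]; ring
    have e2 : ((l₂ fun i => A i j : ℤ) : ℚ) = r * D ^ 2 := by
      rw [hl₂]; push_cast; rw [h0, h1, hDq]; ring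
    constructor
    · have : (0 : ℚ) ≤ ((l₁ fun i => A i j : ℤ) : ℚ) := by rw [e1]; positivity
      exact_mod_cast this
    · have : (0 : ℚ) ≤ ((l₂ fun i => A i j : ℤ) : ℚ) := by rw [e2]; positivity
      exact_mod_cast this
  have hsmul : ∀ v, D ^ 2 • v = l₁ v • b₁ + l₂ v • b₂ := by
    intro v
    ext i
    fin_cases i
    · simp only [Fin.zero_eta, Pi.smul_apply, Pi.add_apply, smul_eq_mul, hl₁, hl₂, hD]; ring
    · simp only [Fin.mk_one, Pi.smul_apply, Pi.add_apply, smul_eq_mul, hl₁, hl₂, hD]; ring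
  refine ⟨(D ^ 2).toNat, l₁, l₂, ?_, ?_, ?_, ?_, ?_, ?_, ?_, ?_, ?_, ?_, ?_⟩
  · have : 0 < D ^ 2 := by positivity
    omega
  · obtain ⟨j, rfl⟩ := hb₁
    exact AddSubmonoid.subset_closure (Set.mem_range_self j)
  · obtain ⟨j, rfl⟩ := hb₂
    exact AddSubmonoid.subset_closure (Set.mem_range_self j)
  · rw [hK, hl₁, hD]; ring
  · rw [hl₁]; ring
  · rw [hl₂]; ring
  · rw [hK, hl₂, hD]; ring
  · intro v hv
    induction hv using AddSubmonoid.closure_induction with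
    | mem c hc => obtain ⟨j, rfl⟩ := hc; exact (hnn j).1
    | zero => simp
    | add a b _ _ ha hb => rw [map_add]; exact add_nonneg ha hb
  · intro v hv
    induction hv using AddSubmonoid.closure_induction with
    | mem c hc => obtain ⟨j, rfl⟩ := hc; exact (hnn j).2
    | zero => simp
    | add a b _ _ ha hb => rw [map_add]; exact add_nonneg ha hb
  · intro v
    rw [← hsmul, ← natCast_zsmul, hK]
  · intro v h1 h2
    have h := hsmul v
    rw [h1, h2, zero_smul, zero_smul, add_zero] at h
    exact (smul_eq_zero.1 h).resolve_left (by positivity)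

/-! ### Monomials of a semigroup ring -/

namespace IsSemigroupRing

variable {G T : Type} [AddCommGroup G] [CommRing T] [Algebra ℂ T]

/-- The element `t^c` of `T`, for `c ∈ S` (a junk value outside `S`). -/
def mon (φ : T →ₐ[ℂ] AddMonoidAlgebra ℂ G) (c : G) : T :=
  Function.invFun φ (AddMonoidAlgebra.single c 1)

variable {S : AddSubmonoid G} {φ : T →ₐ[ℂ] AddMonoidAlgebra ℂ G}

theorem map_mon (h : IsSemigroupRing S φ) {c : G} (hc : c ∈ S) :
    φ (mon φ c) = AddMonoidAlgebra.single c 1 :=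
  Function.invFun_eq (h.exists_monomial c hc)

theorem mon_zero (h : IsSemigroupRing S φ) : mon φ 0 = 1 :=
  h.injective (by rw [h.map_mon S.zero_mem, map_one, AddMonoidAlgebra.one_def])

theorem mon_add (h : IsSemigroupRing S φ) {a b : G} (ha : a ∈ S) (hb : b ∈ S) :
    mon φ (a + b) = mon φ a * mon φ b :=
  h.injective (by
    rw [h.map_mon (S.add_mem ha hb), map_mul, h.map_mon ha, h.map_mon hb,
      AddMonoidAlgebra.single_mul_single, one_mul])

theorem mon_nsmul (h : IsSemigroupRing S φ) {a : G} (ha : a ∈ S) (k : ℕ) :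
    mon φ (k • a) = mon φ a ^ k :=
  h.injective (by
    rw [h.map_mon (S.nsmul_mem ha k), map_pow, h.map_mon ha, AddMonoidAlgebra.single_pow, one_pow])

theorem mon_ne_zero (h : IsSemigroupRing S φ) {c : G} (hc : c ∈ S) : mon φ c ≠ 0 := by
  intro h0
  have h1 := h.map_mon hc
  rw [h0, map_zero] at h1
  have h2 := congrArg (fun f => f.coeff c) h1
  simp at h2

theorem coeff_mon_mul (h : IsSemigroupRing S φ) {c : G} (hc : c ∈ S) (f : T) (d : G) :
    (φ (mon φ c * f)).coeff d = (φ f).coeff (d - c) := by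
  rw [map_mul, h.map_mon hc, AddMonoidAlgebra.coeff_single_mul_apply, one_mul, neg_add_eq_sub]

theorem eq_sum (h : IsSemigroupRing S φ) (f : T) :
    f = ∑ c ∈ (φ f).coeff.support, (φ f).coeff c • mon φ c := by
  apply h.injective
  rw [map_sum]
  conv_lhs => rw [← AddMonoidAlgebra.sum_coeff_single (φ f)]
  refine Finset.sum_congr rfl fun c hc => ?_
  rw [map_smul, h.map_mon (h.mem_of_coeff_ne_zero f c (Finsupp.mem_support_iff.1 hc))]
  simp

/-- The constant term is multiplicative as soon as `S` has no nonzero units. -/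
theorem coeff_zero_mul (h : IsSemigroupRing S φ) (hS : ∀ a ∈ S, ∀ b ∈ S, a + b = 0 → a = 0)
    (f g : T) : (φ (f * g)).coeff 0 = (φ f).coeff 0 * (φ g).coeff 0 := by
  classical
  conv_lhs => rw [h.eq_sum f]
  rw [Finset.sum_mul, map_sum, AddMonoidAlgebra.coeff_sum, Finsupp.finsetSum_apply]
  have hterm : ∀ c ∈ (φ f).coeff.support,
      (φ ((φ f).coeff c • mon φ c * g)).coeff 0 =
        if c = 0 then (φ f).coeff 0 * (φ g).coeff 0 else 0 := by
    intro c hc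
    have hcS := h.mem_of_coeff_ne_zero f c (Finsupp.mem_support_iff.1 hc)
    rw [smul_mul_assoc, map_smul, AddMonoidAlgebra.coeff_smul_apply, h.coeff_mon_mul hcS,
      smul_eq_mul]
    split_ifs with h0
    · rw [h0, sub_zero]
    · have : (φ g).coeff (0 - c) = 0 := by
        by_contra hne
        exact h0 (hS c hcS _ (h.mem_of_coeff_ne_zero g _ hne) (by abel))
      rw [this, mul_zero]
  rw [Finset.sum_congr rfl hterm, Finset.sum_ite_eq']
  split_ifs with h0
  · rfl
  · rw [Finsupp.notMem_support_iff.1 h0, zero_mul]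

/-- The ring homomorphism `T → ℂ` taking the constant term. -/
def constTerm (h : IsSemigroupRing S φ) (hS : ∀ a ∈ S, ∀ b ∈ S, a + b = 0 → a = 0) : T →+* ℂ where
  toFun f := (φ f).coeff 0
  map_one' := by simp [AddMonoidAlgebra.one_def]
  map_mul' := h.coeff_zero_mul hS
  map_zero' := by simp
  map_add' := by simp

end IsSemigroupRing

namespace ConeData

variable {G : Type} [AddCommGroup G] {S : AddSubmonoid G} {b₁ b₂ : G} {K : ℕ} {l₁ l₂ : G →+ ℤ}

theorem pointed (D : ConeData S b₁ b₂ K l₁ l₂) (a : G) (ha : a ∈ S) (b : G) (hb : b ∈ S)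
    (hab : a + b = 0) : a = 0 := by
  have h1 := D.l₁_nonneg a ha
  have h2 := D.l₁_nonneg b hb
  have h3 := D.l₂_nonneg a ha
  have h4 := D.l₂_nonneg b hb
  have h5 := congrArg l₁ hab
  have h6 := congrArg l₂ hab
  rw [map_add, map_zero] at h5 h6
  exact D.eq_zero a (by omega) (by omega)

theorem nsmul_eq (D : ConeData S b₁ b₂ K l₁ l₂) {a : G} (ha : a ∈ S) :
    K • a = (l₁ a).toNat • b₁ + (l₂ a).toNat • b₂ := by
  rw [D.smul_eq, ← natCast_zsmul, ← natCast_zsmul, Int.toNat_of_nonneg (D.l₁_nonneg a ha),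
    Int.toNat_of_nonneg (D.l₂_nonneg a ha)]

variable {T : Type} [CommRing T] [Algebra ℂ T] {φ : T →ₐ[ℂ] AddMonoidAlgebra ℂ G}

open IsSemigroupRing in
theorem mon_pow (D : ConeData S b₁ b₂ K l₁ l₂) (h : IsSemigroupRing S φ) {a : G} (ha : a ∈ S) :
    mon φ a ^ K = mon φ b₁ ^ (l₁ a).toNat * mon φ b₂ ^ (l₂ a).toNat := by
  rw [← h.mon_nsmul ha, D.nsmul_eq ha, h.mon_add (S.nsmul_mem D.mem₁ _) (S.nsmul_mem D.mem₂ _),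
    h.mon_nsmul D.mem₁, h.mon_nsmul D.mem₂]

end ConeData

/-! ### Regular sequences of length two -/

open scoped Pointwise in
theorem isWeaklyRegular_pair_iff {R : Type} [CommRing R] (a b : R) :
    RingTheory.Sequence.IsWeaklyRegular R [a, b] ↔
      (∀ p, a * p = 0 → p = 0) ∧ ∀ p q, b * p = a * q → a ∣ p := by
  rw [RingTheory.Sequence.isWeaklyRegular_cons_iff, RingTheory.Sequence.isWeaklyRegular_cons_iff,
    isSMulRegular_iff_right_eq_zero_of_smul, isSMulRegular_quotient_iff_mem_of_smul_mem]
  simp only [RingTheory.Sequence.IsWeaklyRegular.nil, and_true, smul_eq_mul]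
  have hmem : ∀ p, p ∈ a • (⊤ : Submodule R R) ↔ a ∣ p := by
    intro p
    rw [Submodule.mem_smul_pointwise_iff_exists]
    simp [Dvd.dvd, eq_comm]
  simp only [hmem]
  refine and_congr_right' ⟨fun H p q h => H p ⟨q, h⟩, fun H p ⟨q, h⟩ => H p q h⟩

/-- If `a, b` is a regular sequence and `X` a nonzerodivisor, then no nonzero element of `R/X` is
killed by powers of both `a` and `b`. -/
theorem dvd_of_dvd_pow_mul {R : Type} [CommRing R] {a b X : R}
    (hab : RingTheory.Sequence.IsWeaklyRegular R [a, b]) (hX : ∀ p, X * p = 0 → p = 0)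
    (i j : ℕ) (f : R) (hi : X ∣ a ^ i * f) (hj : X ∣ b ^ j * f) : X ∣ f := by
  rw [isWeaklyRegular_pair_iff] at hab
  obtain ⟨ha, hab⟩ := hab
  have h1 : ∀ f, X ∣ a * f → X ∣ b * f → X ∣ f := by
    rintro f ⟨p, hp⟩ ⟨q, hq⟩
    obtain ⟨p', rfl⟩ := hab p q (by
      rw [← sub_eq_zero]
      exact hX _ (by linear_combination a * hq - b * hp))
    refine ⟨p', ?_⟩
    rw [← sub_eq_zero]
    exact ha _ (by linear_combination hp)
  have h2 : ∀ j f, X ∣ a * f → X ∣ b ^ j * f → X ∣ f := by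
    intro j
    induction j with
    | zero => intro f _ h; simpa using h
    | succ j ih =>
      intro f hf hj
      refine ih f hf (h1 _ ?_ ?_)
      · rw [mul_left_comm]; exact hf.mul_left _
      · rwa [← mul_assoc, ← pow_succ']
  induction i with
  | zero => simpa using hi
  | succ i ih =>
    refine ih (h2 j _ ?_ ?_)
    · rwa [← mul_assoc, ← pow_succ']
    · rw [mul_left_comm]; exact hj.mul_left _

/-! ### Cohen–Macaulayness forces the semigroup to be saturated along the rays -/

open IsSemigroupRing in
/-- The ideal of elements without constant term has height at least two: a prime that contains
`t^{b₁}` and is maximal for avoiding the elements `s t^{N b₂}`, where `s` has a nonzero constant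
term, lies strictly between it and `0`. -/
theorem two_le_height_ker_constTerm {G T : Type} [AddCommGroup G] [CommRing T] [IsDomain T]
    [Algebra ℂ T] {S : AddSubmonoid G} {b₁ b₂ : G} {K : ℕ} {l₁ l₂ : G →+ ℤ}
    {φ : T →ₐ[ℂ] AddMonoidAlgebra ℂ G} (D : ConeData S b₁ b₂ K l₁ l₂)
    (h : IsSemigroupRing S φ) :
    2 ≤ (RingHom.ker (h.constTerm D.pointed)).height := by
  have hK : (0 : ℤ) < K := by exact_mod_cast D.pos
  let ε := h.constTerm D.pointed
  have hε : ∀ f, ε f = (φ f).coeff 0 := fun f => rfl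
  let M : Submonoid T :=
    { carrier := {t | ∃ s N, ε s ≠ 0 ∧ t = mon φ (N • b₂) * s}
      one_mem' := ⟨1, 0, by simp, by simp [h.mon_zero]⟩
      mul_mem' := by
        rintro _ _ ⟨s, N, hs, rfl⟩ ⟨s', N', hs', rfl⟩
        refine ⟨s * s', N + N', by rw [map_mul]; exact mul_ne_zero hs hs', ?_⟩
        rw [add_smul, h.mon_add (S.nsmul_mem D.mem₂ _) (S.nsmul_mem D.mem₂ _)]
        ring }
  have hdisj : Disjoint (Ideal.span {mon φ b₁} : Set T) (M : Set T) := by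
    rw [Set.disjoint_left]
    rintro t ht ⟨s, N, hs, rfl⟩
    obtain ⟨r, hr⟩ := Ideal.mem_span_singleton.1 ht
    have h1 : (φ (mon φ (N • b₂) * s)).coeff (N • b₂) = ε s := by
      rw [h.coeff_mon_mul (S.nsmul_mem D.mem₂ _), sub_self, hε]
    rw [hr, h.coeff_mon_mul D.mem₁] at h1
    have h2 := D.l₁_nonneg _ (h.mem_of_coeff_ne_zero r (N • b₂ - b₁) (by rwa [h1]))
    rw [map_sub, map_nsmul, D.l₁_b₁, D.l₁_b₂, smul_zero] at h2
    omega
  obtain ⟨Q, hQ, hxQ, hQM⟩ := Ideal.exists_le_prime_disjoint _ M hdisj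
  rw [Set.disjoint_left] at hQM
  have hx : mon φ b₁ ∈ Q := hxQ (Ideal.mem_span_singleton_self _)
  have hy : mon φ b₂ ∉ Q := fun hy => hQM hy ⟨1, 1, by simp, by simp⟩
  have hyker : ε (mon φ b₂) = 0 := by
    rw [hε, h.map_mon D.mem₂, AddMonoidAlgebra.coeff_single, Finsupp.single_eq_of_ne]
    intro h0
    have := D.l₂_b₂
    rw [← h0, map_zero] at this
    omega
  have hker : (RingHom.ker ε).IsPrime := RingHom.ker_isPrime ε
  have h0Q : (⊥ : Ideal T) < Q := bot_lt_iff_ne_bot.2 fun h0 =>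
    h.mon_ne_zero D.mem₁ (by rw [h0] at hx; exact hx)
  have hQlt : Q < RingHom.ker ε := by
    refine lt_of_le_of_ne (fun t ht => ?_) fun he => hy (by rw [he]; exact hyker)
    by_contra hne
    exact hQM ht ⟨t, 0, hne, by simp [h.mon_zero]⟩
  have h1 := Ideal.height_add_one_le_of_lt_of_isPrime h0Q
  have h2 := Ideal.height_add_one_le_of_lt_of_isPrime hQlt
  calc (2 : ℕ∞) = 0 + 1 + 1 := by norm_num
    _ ≤ (⊥ : Ideal T).height + 1 + 1 := by gcongr; exact zero_le
    _ ≤ Q.height + 1 := by gcongr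
    _ ≤ _ := h2

open IsSemigroupRing in
/-- If `T` is Cohen–Macaulay, then `(S - ℕb₁) ∩ (S - ℕb₂) ⊆ S`. -/
theorem mem_of_isCohenMacaulayRing {G T : Type} [AddCommGroup G] [CommRing T] [IsDomain T]
    [IsNoetherianRing T] [Algebra ℂ T] {S : AddSubmonoid G} {b₁ b₂ : G} {K : ℕ} {l₁ l₂ : G →+ ℤ}
    {φ : T →ₐ[ℂ] AddMonoidAlgebra ℂ G} (D : ConeData S b₁ b₂ K l₁ l₂)
    (h : IsSemigroupRing S φ) (hCM : IsCohenMacaulayRing T) (c : G) (k l : ℕ)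
    (hk : c + k • b₁ ∈ S) (hl : c + l • b₂ ∈ S) : c ∈ S := by
  let ε := h.constTerm D.pointed
  have hε : ∀ f, ε f = (φ f).coeff 0 := fun f => rfl
  let m : Ideal T := RingHom.ker ε
  have hm : m.IsPrime := RingHom.ker_isPrime ε
  let R := Localization.AtPrime m
  have hinj : Function.Injective (algebraMap T R) :=
    IsLocalization.injective R m.primeCompl_le_nonZeroDivisors
  have : IsDomain R := IsLocalization.isDomain_localization m.primeCompl_le_nonZeroDivisors
  have hdepth : ((2 : ℕ) : ℕ∞) ≤ ringDepth R := by
    have h1 := hCM m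
    rw [IsLocalization.AtPrime.ringKrullDim_eq_height m (Localization.AtPrime m)] at h1
    have h2 : ringDepth R = m.height := by exact_mod_cast h1
    rw [h2]
    exact two_le_height_ker_constTerm D h
  obtain ⟨rs, hlen, hmem, hreg⟩ := (le_ringDepth_iff R 2).1 hdepth
  obtain ⟨a, b, rfl⟩ := List.length_eq_two.1 hlen
  have hX := S.nsmul_mem D.mem₁ k
  have hY := S.nsmul_mem D.mem₂ l
  set X := mon φ (k • b₁) with hXdef
  set Y := mon φ (l • b₂) with hYdef
  set f := mon φ (c + k • b₁) with hfdef
  set g := mon φ (c + l • b₂) with hgdef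
  have hYf : Y * f = X * g := by
    rw [hYdef, hfdef, hXdef, hgdef, ← h.mon_add hY hk, ← h.mon_add hX hl]
    congr 1
    abel
  -- The ideal of denominators of the fraction `t^c = f / X`.
  let J : Ideal R := Submodule.comap (LinearMap.mulRight R (algebraMap T R f))
    (Ideal.span {algebraMap T R X})
  have hJ : ∀ r, r ∈ J ↔ algebraMap T R X ∣ r * algebraMap T R f := fun r =>
    Ideal.mem_span_singleton
  let I : Ideal T := (J.comap (algebraMap T R)).radical
  have hpow : ∀ {t : T} (N : ℕ), t ^ N ∈ I → t ∈ I := fun N ht =>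
    (Ideal.radical_isRadical _) ⟨N, ht⟩
  have hxI : mon φ b₁ ∈ I := hpow k (Ideal.le_radical (by
    rw [← h.mon_nsmul D.mem₁, Ideal.mem_comap, hJ]
    exact Dvd.intro _ rfl))
  have hyI : mon φ b₂ ∈ I := hpow l (Ideal.le_radical (by
    rw [← h.mon_nsmul D.mem₂, Ideal.mem_comap, hJ, ← map_mul, ← hYdef, hYf, map_mul]
    exact Dvd.intro _ rfl))
  have hmonI : ∀ d ∈ S, d ≠ 0 → mon φ d ∈ I := by
    intro d hd hd0
    refine hpow K ?_
    rw [D.mon_pow h hd]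
    by_cases h1 : l₁ d = 0
    · have h2 : l₂ d ≠ 0 := fun h2 => hd0 (D.eq_zero d h1 h2)
      have := D.l₂_nonneg d hd
      exact I.mul_mem_left _ (I.pow_mem_of_mem hyI _ (by omega))
    · have := D.l₁_nonneg d hd
      exact I.mul_mem_right _ (I.pow_mem_of_mem hxI _ (by omega))
  have hmI : m ≤ I := by
    intro t ht
    rw [h.eq_sum t]
    refine I.sum_mem fun d hd => ?_
    have hd' := Finsupp.mem_support_iff.1 hd
    rw [Algebra.smul_def]
    refine I.mul_mem_left _ (hmonI d (h.mem_of_coeff_ne_zero t d hd') fun h0 => hd' ?_)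
    rw [h0]
    exact ht
  have hmaxJ : IsLocalRing.maximalIdeal R ≤ J.radical := by
    rw [← Localization.AtPrime.map_eq_maximalIdeal, Ideal.map_le_iff_le_comap,
      Ideal.comap_radical]
    exact hmI
  obtain ⟨i, hi⟩ := hmaxJ (hmem a (by simp))
  obtain ⟨j, hj⟩ := hmaxJ (hmem b (by simp))
  have hX0 : algebraMap T R X ≠ 0 := fun h0 =>
    h.mon_ne_zero hX (hinj (by rw [h0, map_zero]))
  obtain ⟨q, hq⟩ := dvd_of_dvd_pow_mul hreg.toIsWeaklyRegular
    (fun p hp => (mul_eq_zero.1 hp).resolve_left hX0) i j _ ((hJ _).1 hi) ((hJ _).1 hj)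
  -- Clear the denominator of `q` and compare the coefficients of `t^{c + k b₁}`.
  obtain ⟨⟨r, s⟩, hrs⟩ := IsLocalization.surj m.primeCompl q
  have hfs : f * s = X * r := hinj (by
    rw [map_mul, map_mul, hq, mul_assoc]
    exact congrArg _ hrs)
  have hs : ε s ≠ 0 := s.2
  have h1 : (φ (f * s)).coeff (c + k • b₁) = ε s := by
    rw [h.coeff_mon_mul hk, sub_self, hε]
  rw [hfs, h.coeff_mon_mul hX, add_sub_cancel_right] at h1
  exact h.mem_of_coeff_ne_zero r c (by rwa [h1])

/-! ### Flat integral extensions of factorial surfaces -/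

/-- Contraction along an integral extension is strictly monotone on primes. -/
theorem height_le_height_under {P T : Type} [CommRing P] [CommRing T] [Algebra P T]
    [Algebra.IsIntegral P T] (p : Ideal T) [p.IsPrime] :
    p.height ≤ (p.under P).height := by
  let F : PrimeSpectrum T → PrimeSpectrum P := fun q => ⟨q.asIdeal.under P, inferInstance⟩
  have hF : StrictMono F := by
    intro q q' hqq'
    exact Ideal.IsIntegral.comap_lt_comap (R := P) (I := q.asIdeal) (J := q'.asIdeal) hqq'
  have h1 := Order.height_le_height_apply_of_strictMono F hF ⟨p, inferInstance⟩
  rw [← PrimeSpectrum.height_eq_orderHeight, ← PrimeSpectrum.height_eq_orderHeight] at h1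
  exact h1

/-- In a Noetherian factorial domain, a prime of height at least two contains a regular sequence of
length two: a prime element `f`, and any element outside `(f)`, which is a prime of height one. -/
theorem exists_isWeaklyRegular_pair {P : Type} [CommRing P] [IsDomain P] [IsNoetherianRing P]
    [UniqueFactorizationMonoid P] (q : Ideal P) [q.IsPrime] (hq : 2 ≤ q.height) :
    ∃ f ∈ q, ∃ g ∈ q, RingTheory.Sequence.IsWeaklyRegular P [f, g] := by
  have hq0 : q ≠ ⊥ := by
    rintro rfl
    rw [Ideal.height_bot] at hq
    exact absurd hq (by norm_num)
  obtain ⟨f, hfq, hf⟩ := Ideal.IsPrime.exists_mem_prime_of_ne_bot ‹q.IsPrime› hq0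
  have hne : ¬ q ≤ Ideal.span {f} := by
    intro hle
    have h1 := hq.trans ((Ideal.height_mono hle).trans
      (Ideal.height_span_singleton_le_one hf.not_isUnit))
    exact absurd h1 (by norm_num)
  obtain ⟨g, hgq, hgf⟩ := Set.not_subset.1 hne
  refine ⟨f, hfq, g, hgq, (isWeaklyRegular_pair_iff f g).2 ⟨fun p hp =>
    (mul_eq_zero.1 hp).resolve_left hf.ne_zero, fun p r hpr => ?_⟩⟩
  exact (hf.dvd_or_dvd (Dvd.intro _ hpr.symm)).resolve_left fun hd =>
    hgf (Ideal.mem_span_singleton.2 hd)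

/-- A flat integral extension of a factorial Noetherian domain of dimension at most two is
Cohen–Macaulay. -/
theorem isCohenMacaulayRing_of_flat {P T : Type} [CommRing P] [IsDomain P] [IsNoetherianRing P]
    [UniqueFactorizationMonoid P] (hP : ringKrullDim P ≤ 2) [CommRing T] [IsDomain T]
    [IsNoetherianRing T] [Algebra P T] [Algebra.IsIntegral P T] [Module.Flat P T] :
    IsCohenMacaulayRing T := by
  intro p hp
  let R := Localization.AtPrime p
  have hpq := height_le_height_under (P := P) p
  have hq2 : (p.under P).height ≤ 2 := by
    have h1 := (Ideal.height_le_ringKrullDim_of_ne_top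
      (Ideal.IsPrime.ne_top (I := p.under P) inferInstance)).trans hP
    exact WithBot.coe_le_coe.1 h1
  have hdim : ringKrullDim R = p.height := IsLocalization.AtPrime.ringKrullDim_eq_height p R
  obtain ⟨h, hh⟩ := ENat.ne_top_iff_exists.1 (ne_top_of_le_ne_top (by simp) (hpq.trans hq2))
  have hh2 : h ≤ 2 := by
    have := hpq.trans hq2
    rw [← hh] at this
    exact_mod_cast this
  -- It suffices to find a weakly regular sequence in `T`, contained in `p`, of length `h`.
  have key : ∀ rs : List T, rs.length = h → (∀ r ∈ rs, r ∈ p) →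
      RingTheory.Sequence.IsWeaklyRegular T rs → (ringDepth R : WithBot ℕ∞) = ringKrullDim R := by
    intro rs hlen hmem hreg
    rw [hdim, ← hh, ringDepth_eq_of_le R h (by rw [hdim, ← hh]; rfl)]
    refine (le_ringDepth_iff R h).2 ⟨rs.map (algebraMap T R), by simpa using hlen, ?_,
      hreg.isRegular_of_isLocalization_of_mem R p hmem⟩
    intro r hr
    obtain ⟨t, ht, rfl⟩ := List.mem_map.1 hr
    exact (IsLocalization.AtPrime.to_map_mem_maximal_iff R p t).2 (hmem t ht)
  interval_cases h
  · exact key [] rfl (by simp) (RingTheory.Sequence.IsWeaklyRegular.nil _ _)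
  · obtain ⟨t, htp, ht0⟩ := Submodule.exists_mem_ne_zero_of_ne_bot (p := p) (by
      rintro rfl
      rw [Ideal.height_bot] at hh
      exact absurd hh (by norm_num))
    refine key [t] rfl (by simpa using htp) ?_
    rw [RingTheory.Sequence.isWeaklyRegular_cons_iff]
    refine ⟨isSMulRegular_iff_right_eq_zero_of_smul.2 fun r hr =>
      (mul_eq_zero.1 hr).resolve_left ht0, RingTheory.Sequence.IsWeaklyRegular.nil _ _⟩
  · obtain ⟨f, hf, g, hg, hreg⟩ := exists_isWeaklyRegular_pair (p.under P)
      (le_of_eq_of_le hh hpq)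
    refine key [algebraMap P T f, algebraMap P T g] rfl ?_ hreg.of_flat
    intro r hr
    simp only [List.mem_cons, List.not_mem_nil, or_false] at hr
    rcases hr with rfl | rfl
    · exact hf
    · exact hg

/-! ### Freeness over the polynomial ring in two monomials -/

/-- The exponents of the monomials of the semigroup ring that are divisible neither by `t^{b₁}` nor
by `t^{b₂}`. -/
def irreducibles {G : Type} [AddCommGroup G] (S : AddSubmonoid G) (b₁ b₂ : G) : Set G :=
  {s | s ∈ S ∧ s - b₁ ∉ S ∧ s - b₂ ∉ S}

/-- Subtract `b₁` and `b₂` from `c` as long as the result stays in `S`; the sum of the coordinates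
decreases. -/
theorem exists_eq_add {G : Type} [AddCommGroup G] {S : AddSubmonoid G} {b₁ b₂ : G} {K : ℕ}
    {l₁ l₂ : G →+ ℤ} (D : ConeData S b₁ b₂ K l₁ l₂) (c : G) (hc : c ∈ S) :
    ∃ s ∈ irreducibles S b₁ b₂, ∃ i j : ℕ, c = s + (i • b₁ + j • b₂) := by
  have hK := D.pos
  obtain ⟨N, hN⟩ : ∃ N, (l₁ c + l₂ c).toNat = N := ⟨_, rfl⟩
  induction N using Nat.strong_induction_on generalizing c with
  | _ N ih =>
    have h1 := D.l₁_nonneg c hc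
    have h2 := D.l₂_nonneg c hc
    by_cases hc1 : c - b₁ ∈ S
    · have h3 := D.l₁_nonneg _ hc1
      have h4 := D.l₂_nonneg _ hc1
      rw [map_sub] at h3 h4
      have h5 := D.l₁_b₁
      have h6 := D.l₂_b₁
      obtain ⟨s, hs, i, j, hij⟩ := ih _ (by rw [map_sub, map_sub]; omega) (c - b₁) hc1 rfl
      refine ⟨s, hs, i + 1, j, ?_⟩
      rw [sub_eq_iff_eq_add.1 hij, add_smul, one_smul]
      abel
    by_cases hc2 : c - b₂ ∈ S
    · have h3 := D.l₁_nonneg _ hc2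
      have h4 := D.l₂_nonneg _ hc2
      rw [map_sub] at h3 h4
      have h5 := D.l₁_b₂
      have h6 := D.l₂_b₂
      obtain ⟨s, hs, i, j, hij⟩ := ih _ (by rw [map_sub, map_sub]; omega) (c - b₂) hc2 rfl
      refine ⟨s, hs, i, j + 1, ?_⟩
      rw [sub_eq_iff_eq_add.1 hij, add_smul, one_smul]
      abel
    exact ⟨c, ⟨hc, hc1, hc2⟩, 0, 0, by simp⟩

/-- If `i < i'`, then `s - b₁` lies in both `S - ℕb₁` and `S - ℕb₂`, hence in `S`, against the
choice of `s`; the case `j < j'` is symmetric. -/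
theorem le_and_le_of_add_eq_add {G : Type} [AddCommGroup G] {S : AddSubmonoid G} {b₁ b₂ : G}
    (hb₁ : b₁ ∈ S) (hb₂ : b₂ ∈ S)
    (hS : ∀ (c : G) (k l : ℕ), c + k • b₁ ∈ S → c + l • b₂ ∈ S → c ∈ S)
    {s s' : G} (hs : s ∈ irreducibles S b₁ b₂) (hs' : s' ∈ S) {i j i' j' : ℕ}
    (h : s + (i • b₁ + j • b₂) = s' + (i' • b₁ + j' • b₂)) : i' ≤ i ∧ j' ≤ j := by
  constructor
  · by_contra hlt
    obtain ⟨k, rfl⟩ : ∃ k, i' = i + 1 + k := ⟨i' - (i + 1), by omega⟩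
    refine hs.2.1 (hS _ 1 j (by simpa using hs.1) ?_)
    have : s - b₁ + j • b₂ = s' + (k • b₁ + j' • b₂) := by
      rw [← sub_eq_zero] at h ⊢
      rw [← h]
      simp only [add_smul, one_smul]
      abel
    rw [this]
    exact S.add_mem hs' (S.add_mem (S.nsmul_mem hb₁ _) (S.nsmul_mem hb₂ _))
  · by_contra hlt
    obtain ⟨k, rfl⟩ : ∃ k, j' = j + 1 + k := ⟨j' - (j + 1), by omega⟩
    refine hs.2.2 (hS _ i 1 ?_ (by simpa using hs.1))
    have : s - b₂ + i • b₁ = s' + (i' • b₁ + k • b₂) := by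
      rw [← sub_eq_zero] at h ⊢
      rw [← h]
      simp only [add_smul, one_smul]
      abel
    rw [this]
    exact S.add_mem hs' (S.add_mem (S.nsmul_mem hb₁ _) (S.nsmul_mem hb₂ _))

/-- When `(S - ℕb₁) ∩ (S - ℕb₂) = S`, the decomposition of `exists_eq_add` is unique. -/
theorem eq_of_add_eq_add {G : Type} [AddCommGroup G] {S : AddSubmonoid G} {b₁ b₂ : G}
    (hb₁ : b₁ ∈ S) (hb₂ : b₂ ∈ S)
    (hS : ∀ (c : G) (k l : ℕ), c + k • b₁ ∈ S → c + l • b₂ ∈ S → c ∈ S)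
    {s s' : G} (hs : s ∈ irreducibles S b₁ b₂) (hs' : s' ∈ irreducibles S b₁ b₂) {i j i' j' : ℕ}
    (h : s + (i • b₁ + j • b₂) = s' + (i' • b₁ + j' • b₂)) : s = s' ∧ i = i' ∧ j = j' := by
  obtain ⟨h1, h2⟩ := le_and_le_of_add_eq_add hb₁ hb₂ hS hs hs'.1 h
  obtain ⟨h3, h4⟩ := le_and_le_of_add_eq_add hb₁ hb₂ hS hs' hs.1 h.symm
  obtain rfl : i = i' := le_antisymm h3 h1
  obtain rfl : j = j' := le_antisymm h4 h2
  exact ⟨add_right_cancel h, rfl, rfl⟩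

section Param

open IsSemigroupRing

/-- The map `ℂ[X₀, X₁] → T` sending `X₀, X₁` to `t^{b₁}, t^{b₂}`. -/
def paramMap {G T : Type} [AddCommGroup G] [CommRing T] [Algebra ℂ T]
    (φ : T →ₐ[ℂ] AddMonoidAlgebra ℂ G) (b₁ b₂ : G) : MvPolynomial (Fin 2) ℂ →ₐ[ℂ] T :=
  aeval ![mon φ b₁, mon φ b₂]

variable {G T : Type} [AddCommGroup G] [CommRing T] [Algebra ℂ T] {S : AddSubmonoid G}
  {b₁ b₂ : G} {K : ℕ} {l₁ l₂ : G →+ ℤ} {φ : T →ₐ[ℂ] AddMonoidAlgebra ℂ G}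

theorem paramMap_monomial (h : IsSemigroupRing S φ) (hb₁ : b₁ ∈ S) (hb₂ : b₂ ∈ S)
    (e : Fin 2 →₀ ℕ) (r : ℂ) :
    paramMap φ b₁ b₂ (monomial e r) = r • mon φ (e 0 • b₁ + e 1 • b₂) := by
  rw [paramMap, aeval_monomial, Finsupp.prod_fintype _ _ (by simp), Fin.prod_univ_two,
    h.mon_add (S.nsmul_mem hb₁ _) (S.nsmul_mem hb₂ _), h.mon_nsmul hb₁, h.mon_nsmul hb₂,
    Algebra.smul_def]
  simp

theorem coeff_paramMap_mul (h : IsSemigroupRing S φ) (hb₁ : b₁ ∈ S) (hb₂ : b₂ ∈ S)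
    (hS : ∀ (c : G) (k l : ℕ), c + k • b₁ ∈ S → c + l • b₂ ∈ S → c ∈ S)
    {s s' : G} (hs : s ∈ irreducibles S b₁ b₂) (hs' : s' ∈ irreducibles S b₁ b₂)
    (e : Fin 2 →₀ ℕ) (p : MvPolynomial (Fin 2) ℂ) [Decidable (s = s')] :
    (φ (paramMap φ b₁ b₂ p * mon φ s)).coeff (s' + (e 0 • b₁ + e 1 • b₂)) =
      if s = s' then p.coeff e else 0 := by
  classical
  induction p using MvPolynomial.induction_on' with
  | monomial u r =>
    have hu : u 0 • b₁ + u 1 • b₂ ∈ S := S.add_mem (S.nsmul_mem hb₁ _) (S.nsmul_mem hb₂ _)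
    rw [paramMap_monomial h hb₁ hb₂, smul_mul_assoc, ← h.mon_add hu hs.1, map_smul,
      h.map_mon (S.add_mem hu hs.1), AddMonoidAlgebra.coeff_smul_apply,
      AddMonoidAlgebra.coeff_single, Finsupp.single_apply, coeff_monomial, smul_eq_mul]
    by_cases hss : s = s'
    · subst hss
      by_cases hue : u = e
      · subst hue
        simp [add_comm]
      · rw [if_neg, if_pos rfl, if_neg hue, mul_zero]
        intro heq
        rw [add_comm] at heq
        obtain ⟨-, h0, h1⟩ := eq_of_add_eq_add hb₁ hb₂ hS hs hs heq
        exact hue (by ext i; fin_cases i <;> assumption)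
    · rw [if_neg, if_neg hss, mul_zero]
      intro heq
      rw [add_comm] at heq
      exact hss (eq_of_add_eq_add hb₁ hb₂ hS hs hs' heq).1
  | add p q hp hq =>
    rw [map_add (paramMap φ b₁ b₂), add_mul, map_add φ, AddMonoidAlgebra.coeff_add, Finsupp.add_apply, hp, hq,
      coeff_add]
    split_ifs <;> simp

/-- When `(S - ℕb₁) ∩ (S - ℕb₂) = S`, the monomials `t^s` with `s` irreducible are a basis of
`T` over `ℂ[t^{b₁}, t^{b₂}]`. -/
theorem paramMap_flat (D : ConeData S b₁ b₂ K l₁ l₂) (h : IsSemigroupRing S φ)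
    (hS : ∀ (c : G) (k l : ℕ), c + k • b₁ ∈ S → c + l • b₂ ∈ S → c ∈ S) :
    (paramMap φ b₁ b₂).toRingHom.Flat := by
  classical
  algebraize [(paramMap φ b₁ b₂).toRingHom]
  have hsmul : ∀ (p : MvPolynomial (Fin 2) ℂ) (t : T), p • t = paramMap φ b₁ b₂ p * t :=
    fun p t => rfl
  let v : irreducibles S b₁ b₂ → T := fun s => mon φ s
  have hli : LinearIndependent (MvPolynomial (Fin 2) ℂ) v := by
    rw [linearIndependent_iff']
    intro F g hg s hs
    ext e
    have h1 := congrArg (fun t => (φ t).coeff (s + (e 0 • b₁ + e 1 • b₂))) hg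
    simp only [hsmul, map_sum, map_zero, AddMonoidAlgebra.coeff_sum, Finsupp.finsetSum_apply,
      AddMonoidAlgebra.coeff_zero, Finsupp.coe_zero, Pi.zero_apply, v] at h1
    rw [Finset.sum_congr rfl fun s' _ =>
      coeff_paramMap_mul h D.mem₁ D.mem₂ hS s'.2 s.2 e (g s')] at h1
    simp only [← Subtype.ext_iff, Finset.sum_ite_eq', hs, if_true] at h1
    rw [h1, coeff_zero]
  have hsp : ⊤ ≤ Submodule.span (MvPolynomial (Fin 2) ℂ) (Set.range v) := by
    intro t _
    rw [h.eq_sum t]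
    refine Submodule.sum_mem _ fun c hc => ?_
    have hcS := h.mem_of_coeff_ne_zero t c (Finsupp.mem_support_iff.1 hc)
    obtain ⟨s, hs, i, j, rfl⟩ := exists_eq_add D c hcS
    have he : (φ t).coeff (s + (i • b₁ + j • b₂)) • mon φ (s + (i • b₁ + j • b₂)) =
        (monomial (Finsupp.equivFunOnFinite.symm ![i, j])
          ((φ t).coeff (s + (i • b₁ + j • b₂))) : MvPolynomial (Fin 2) ℂ) • v ⟨s, hs⟩ := by
      rw [hsmul, paramMap_monomial h D.mem₁ D.mem₂, smul_mul_assoc, add_comm s]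
      simp only [Finsupp.equivFunOnFinite_symm_apply_apply, Matrix.cons_val_zero, Matrix.cons_val_one,
        v]
      rw [h.mon_add (S.add_mem (S.nsmul_mem D.mem₁ _) (S.nsmul_mem D.mem₂ _)) hs.1]
    rw [he]
    exact Submodule.smul_mem _ _ (Submodule.subset_span (Set.mem_range_self _))
  have : Module.Free (MvPolynomial (Fin 2) ℂ) T := Module.Free.of_basis (Module.Basis.mk hli hsp)
  exact (inferInstance : Module.Flat (MvPolynomial (Fin 2) ℂ) T)

/-- The monomials `t^c` are integral, because `K c` is a nonnegative combination of `b₁` and `b₂`. -/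
theorem paramMap_isIntegral (D : ConeData S b₁ b₂ K l₁ l₂) (h : IsSemigroupRing S φ) :
    (paramMap φ b₁ b₂).toRingHom.IsIntegral := by
  intro t
  rw [h.eq_sum t]
  algebraize [(paramMap φ b₁ b₂).toRingHom]
  refine IsIntegral.sum (R := MvPolynomial (Fin 2) ℂ) _ fun c hc => ?_
  have hcS := h.mem_of_coeff_ne_zero t c (Finsupp.mem_support_iff.1 hc)
  rw [Algebra.smul_def]
  refine IsIntegral.mul ?_ (IsIntegral.of_pow D.pos ?_)
  · rw [← (paramMap φ b₁ b₂).commutes]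
    exact isIntegral_algebraMap (R := MvPolynomial (Fin 2) ℂ) (A := T)
  · rw [D.mon_pow h hcS, ← h.mon_nsmul D.mem₁, ← h.mon_nsmul D.mem₂,
      ← h.mon_add (S.nsmul_mem D.mem₁ _) (S.nsmul_mem D.mem₂ _)]
    have := paramMap_monomial h D.mem₁ D.mem₂
      (Finsupp.equivFunOnFinite.symm ![(l₁ c).toNat, (l₂ c).toNat]) 1
    simp only [Finsupp.equivFunOnFinite_symm_apply_apply, Matrix.cons_val_zero,
      Matrix.cons_val_one, one_smul] at this
    rw [← this]
    exact isIntegral_algebraMap (R := MvPolynomial (Fin 2) ℂ) (A := T)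

theorem isCohenMacaulayRing_of_forall_mem [IsDomain T] [IsNoetherianRing T]
    (D : ConeData S b₁ b₂ K l₁ l₂) (h : IsSemigroupRing S φ)
    (hS : ∀ (c : G) (k l : ℕ), c + k • b₁ ∈ S → c + l • b₂ ∈ S → c ∈ S) :
    IsCohenMacaulayRing T := by
  have hflat := paramMap_flat D h hS
  have h_integral := paramMap_isIntegral D h
  algebraize [(paramMap φ b₁ b₂).toRingHom]
  refine isCohenMacaulayRing_of_flat (P := MvPolynomial (Fin 2) ℂ) ?_
  rw [MvPolynomial.ringKrullDim_of_isNoetherianRing, ringKrullDim_eq_zero_of_field]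
  simp

end Param

/-! ### The criterion -/

/-- For a pointed `2`-dimensional affine semigroup `ℕA` with `ℤA = ℤ²`, the semigroup
ring `ℂ[ℕA] ≅ ℂ[∂]/I_A` is Cohen–Macaulay iff `(ℕA - ℕb₁) ∩ (ℕA - ℕb₂) = ℕA`, where
`b₁, b₂` are columns of `A` lying on the two extreme rays of the cone `ℚ_{≥0}A`. -/
theorem stmt9 {n : ℕ} (A : Matrix (Fin 2) (Fin n) ℤ)
    (hrank : A.rank = 2)
    (hcols : ∀ j, (fun i => A i j) ≠ 0)
    (hpointed : IsPointed A)
    (hZA : AddSubgroup.closure (cols A) = ⊤)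
    (b₁ b₂ : Fin 2 → ℤ)
    (hb₁ : ∃ j, b₁ = fun i => A i j)
    (hb₂ : ∃ j, b₂ = fun i => A i j)
    -- `b₁` and `b₂` span the cone `ℚ_{≥0}A` …
    (hspan : ∀ j, ∃ q r : ℚ, 0 ≤ q ∧ 0 ≤ r ∧
      (fun i => (A i j : ℚ)) = q • (fun i => (b₁ i : ℚ)) + r • (fun i => (b₂ i : ℚ)))
    -- … and lie on two distinct rays, hence on the two extreme rays of that cone.
    (hrays : ¬ ∃ q : ℚ, (fun i => (b₂ i : ℚ)) = q • (fun i => (b₁ i : ℚ))) :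
    IsCohenMacaulayRing (MvPolynomial (Fin n) ℂ ⧸ toricIdeal A) ↔
      {c : Fin 2 → ℤ | ∃ m : ℕ, c + m • b₁ ∈ AddSubmonoid.closure (cols A)} ∩
        {c : Fin 2 → ℤ | ∃ m : ℕ, c + m • b₂ ∈ AddSubmonoid.closure (cols A)} =
      (AddSubmonoid.closure (cols A) : Set (Fin 2 → ℤ)) := by
  have hSR := isSemigroupRing_toricEmb A
  obtain ⟨K, l₁, l₂, D⟩ := exists_coneData A hcols b₁ b₂ hb₁ hb₂ hspan hrays
  have hdom : IsDomain (MvPolynomial (Fin n) ℂ ⧸ toricIdeal A) :=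
    hSR.injective.isDomain (toricEmb A).toRingHom
  constructor
  · intro hCM
    ext c
    constructor
    · rintro ⟨⟨k, hk⟩, ⟨l, hl⟩⟩
      exact mem_of_isCohenMacaulayRing D hSR hCM c k l hk hl
    · intro hc
      exact ⟨⟨0, by simpa using hc⟩, ⟨0, by simpa using hc⟩⟩
  · intro hS
    refine isCohenMacaulayRing_of_forall_mem D hSR fun c k l hk hl => ?_
    have hc : c ∈ (AddSubmonoid.closure (cols A) : Set (Fin 2 → ℤ)) := by
      rw [← hS]
      exact ⟨⟨k, hk⟩, ⟨l, hl⟩⟩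
    exact hc

end
end

section
/- Let A be the 2×4 integer matrix with columns a₁ = (0,1), a₂ = (1,1), a₃ = (2,0), a₄ = (3,0), and let I_A ⊆ ℂ[∂₁,∂₂,∂₃,∂₄] be its toric ideal. Then neither ℂ[∂₁,…,∂₄]/I_A nor ℂ[∂₁,…,∂₄]/in(I_A) is Cohen–Macaulay, where in(I_A) is the initial ideal of I_A with respect to total degree. -/
/-!
Write `x, y, z, w` for `∂₁, ∂₂, ∂₃, ∂₄`. The semigroup `ℕA` is `ℕ² ∖ {(1, 0)}`, and the hole `(1, 0)`
enters `ℕA` after adding any generator. Hence multiplication by the missing monomial is a map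
`m → R` on the maximal ideal at the origin that is not multiplication by an element of `R`, so that
`Ext¹(R/m, R) ≠ 0` and `depth R ≤ 1`, although `dim R = 2`. The missing monomial is the fraction
`xz / y`, so the same can be said inside `R`: `y` is a nonzerodivisor and `xz ∉ yR`, but
`xz · m ⊆ yR`. This formulation also holds for `ℂ[∂]/in(I_A)`: there `x²z = xz² = 0` and
`xzw = yz²`.

`nontrivial_ext_one` turns such a pair `(y, u)` in a local ring into a nonzero class in `Ext¹`, and
`not_isCohenMacaulayRing_of_socle` passes from a ring to its localization and adds a chain of three
primes, which bounds the dimension below by two.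

Both quotients have a basis indexed by `ℕA`. For `I_A` the coefficient at `s ∈ ℕA` of a polynomial
is the sum of its coefficients over the whole fibre of `s`; for `in(I_A)` only those exponent
vectors in the fibre are counted that have the minimal total degree
`d(i, j) = j + ⌈max(i - j, 0) / 3⌉`. Thus both ideals are kernels of a map `fiberSum P`, with `P`
always true or `P = Tight`, and the properties of `y` and `xz` are read off from exponent vectors.
-/

open MvPolynomial CategoryTheory

noncomputable section

/-! ### A nonzero class in `Ext¹` -/

/-- The class is that of `m → R`, `f ↦ u f / y`. Pulled back to a projective resolution `P` of the
residue field along a lift `ψ : P₀ → R` of the augmentation, it is a cocycle on `P₁`; a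
coboundary would make `u` a multiple of `y`. -/
theorem nontrivial_ext_one (R : Type) [CommRing R] [IsLocalRing R] (y u : R)
    (hym : y ∈ IsLocalRing.maximalIdeal R) (hy : ∀ a, y * a = 0 → a = 0)
    (hm : ∀ f ∈ IsLocalRing.maximalIdeal R, ∃ g, y * g = u * f)
    (hu : ∀ g, u ≠ y * g) :
    Nontrivial (((Ext R (ModuleCat.{0} R) 1).obj
        (Opposite.op (ModuleCat.of R (R ⧸ IsLocalRing.maximalIdeal R)))).obj
      (ModuleCat.of R R)) := by
  by_contra hnt
  rw [not_nontrivial_iff_subsingleton] at hnt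
  set m := IsLocalRing.maximalIdeal R with hmdef
  let P := ProjectiveResolution.of (ModuleCat.of R (R ⧸ m))
  have hz : Limits.IsZero ((P.complex.linearYonedaObj R (ModuleCat.of R R)).homology 1) :=
    (ModuleCat.isZero_of_subsingleton _).of_iso (P.isoExt 1 (ModuleCat.of R R)).symm
  rw [← HomologicalComplex.exactAt_iff_isZero_homology,
    HomologicalComplex.exactAt_iff' _ 0 1 2 (by simp) (by simp)] at hz
  have hex := (ShortComplex.moduleCat_exact_iff _).1 hz
  have inj : ∀ a b, y * a = y * b → a = b := fun a b h =>
    sub_eq_zero.1 (hy _ (by rw [mul_sub, h, sub_self]))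
  choose! φ hφ using hm
  let q : ModuleCat.of R R ⟶ ModuleCat.of R (R ⧸ m) := ModuleCat.ofHom (Submodule.mkQ m)
  have : Epi q := (ModuleCat.epi_iff_surjective _).2 (Submodule.mkQ_surjective m)
  have : Projective (P.complex.X 0) := P.projective 0
  let π₀ : P.complex.X 0 ⟶ ModuleCat.of R (R ⧸ m) := P.π.f 0
  let ψ : P.complex.X 0 ⟶ ModuleCat.of R R := Projective.factorThru π₀ q
  have hψ : ψ ≫ q = π₀ := Projective.factorThru_comp _ _
  have hdπ : P.complex.d 1 0 ≫ π₀ = 0 := P.complex_d_comp_π_f_zero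
  have hψm : ∀ p, ψ.hom (P.complex.d 1 0 |>.hom p) ∈ m := by
    intro p
    have h1 : (P.complex.d 1 0 ≫ ψ ≫ q).hom p = 0 := by
      rw [hψ, hdπ]; rfl
    exact (Submodule.Quotient.mk_eq_zero m).1 h1
  -- the cocycle `p ↦ (u / y) ψ(d p)`
  let θ : P.complex.X 1 ⟶ ModuleCat.of R R := ModuleCat.ofHom
    { toFun := fun p => φ (ψ.hom (P.complex.d 1 0 |>.hom p))
      map_add' := fun a b => inj _ _ (by
        rw [hφ _ (hψm _), mul_add, hφ _ (hψm _), hφ _ (hψm _), map_add, map_add, mul_add])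
      map_smul' := fun c a => inj _ _ (by
        rw [hφ _ (hψm _), RingHom.id_apply, smul_eq_mul, mul_left_comm, hφ _ (hψm _), map_smul,
          map_smul, smul_eq_mul, mul_left_comm]) }
  have hθ : P.complex.d 2 1 ≫ θ = 0 := by
    ext p
    have h0 : (P.complex.d 1 0).hom ((P.complex.d 2 1).hom p) = 0 := by
      have := P.complex.d_comp_d 2 1 0
      have h := congrArg (fun f => ModuleCat.Hom.hom f p) this
      exact h
    refine inj _ _ ?_
    change y * φ (ψ.hom ((P.complex.d 1 0).hom ((P.complex.d 2 1).hom p))) = y * 0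
    rw [hφ _ (hψm _), h0, map_zero, mul_zero, mul_zero]
  obtain ⟨h, hh⟩ := hex θ hθ
  change P.complex.X 0 ⟶ ModuleCat.of R R at h
  replace hh : P.complex.d 1 0 ≫ h = θ := hh
  have hsurj : Function.Surjective π₀.hom :=
    (ModuleCat.epi_iff_surjective _).1 (inferInstanceAs (Epi (P.π.f 0)))
  -- for `p` over `1`, the element `y p` is a boundary, on which the cocycle takes the value
  -- `u ψ(p)`, while a coboundary takes a value in `y R`
  obtain ⟨p, hp⟩ := hsurj (Submodule.Quotient.mk 1)
  have hex0 := (ShortComplex.moduleCat_exact_iff _).1 P.exact₀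
  obtain ⟨r, hr⟩ := hex0 (y • p) (by
    change π₀.hom (y • p) = 0
    rw [map_smul, hp]
    exact (Submodule.Quotient.mk_eq_zero m).2 (by simpa using hym))
  replace hr : (P.complex.d 1 0).hom r = y • p := hr
  have e1 : h.hom (y • p) = φ (ψ.hom (y • p)) := by
    rw [← hr]; exact congrArg (fun f => ModuleCat.Hom.hom f r) hh
  have e2 : u * ψ.hom p = y * h.hom p := by
    refine inj _ _ ?_
    have h3 := hφ (ψ.hom (y • p)) (hr ▸ hψm r)
    rw [← e1, map_smul, map_smul] at h3
    simp only [smul_eq_mul] at h3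
    rw [h3]; ring
  have hunit : IsUnit (ψ.hom p) := by
    by_contra hc
    have h4 : ψ.hom p ∈ m := hc
    have h5 : (ψ ≫ q).hom p = Submodule.Quotient.mk 1 := by rw [hψ, hp]
    have h6 : (Submodule.Quotient.mk (1 : R) : R ⧸ m) = 0 := by
      rw [← h5]; exact (Submodule.Quotient.mk_eq_zero m).2 h4
    exact (Ideal.ne_top_iff_one m).1 (IsLocalRing.maximalIdeal.isMaximal R).ne_top
      ((Submodule.Quotient.mk_eq_zero m).1 h6)
  obtain ⟨v, hv⟩ := hunit
  refine hu (h.hom p * ↑v⁻¹) ?_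
  rw [← mul_assoc, ← e2, ← hv, mul_assoc, Units.mul_inv, mul_one]

/-! ### A criterion for failure of the Cohen–Macaulay property -/

/-- If `y` is regular and `u` represents a nonzero element of `T / y` killed by `m`, then `T_m` has
depth at most one, whereas the chain `p₀ < p₁ < m` forces dimension at least two. -/
theorem not_isCohenMacaulayRing_of_socle (T : Type) [CommRing T] (m : Ideal T) [m.IsMaximal]
    (y u : T) (hym : y ∈ m) (hy : ∀ a, y * a = 0 → a = 0)
    (hm : ∀ f ∈ m, ∃ g, y * g = u * f) (hu : ∀ g, u ≠ y * g)
    (p₀ p₁ : Ideal T) [p₀.IsPrime] [p₁.IsPrime] (h₀₁ : p₀ < p₁) (h₁m : p₁ < m) :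
    ¬ IsCohenMacaulayRing T := by
  intro hCM
  have hprime : m.IsPrime := inferInstance
  have heq := hCM m
  rw [IsLocalization.AtPrime.ringKrullDim_eq_height m] at heq
  replace heq : ringDepth (Localization.AtPrime m) = m.height := by exact_mod_cast heq
  have h2 : (2 : ℕ∞) ≤ m.height := by
    have a1 := Ideal.height_add_one_le_of_lt_of_isPrime h₀₁
    have a2 := Ideal.height_add_one_le_of_lt_of_isPrime h₁m
    calc (2 : ℕ∞) = 0 + 1 + 1 := by norm_num
      _ ≤ p₀.height + 1 + 1 := by gcongr; exact zero_le
      _ ≤ p₁.height + 1 := by gcongr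
      _ ≤ m.height := a2
  let R := Localization.AtPrime m
  let α := algebraMap T R
  have hreg : ∀ a : R, α y * a = 0 → a = 0 := by
    intro a ha
    obtain ⟨b, s, rfl⟩ := IsLocalization.exists_mk'_eq m.primeCompl a
    rw [IsLocalization.mul_mk'_eq_mk'_of_mul, IsLocalization.mk'_eq_zero_iff] at ha
    obtain ⟨c, hc⟩ := ha
    exact (IsLocalization.mk'_eq_zero_iff b s).2 ⟨c, hy _ (by rw [← hc]; ring)⟩
  have h1 : ringDepth R ≤ 1 := by
    refine sInf_le ⟨1, by simp, ?_⟩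
    refine nontrivial_ext_one R (α y) (α u) ?_ hreg ?_ ?_
    · exact (IsLocalization.AtPrime.to_map_mem_maximal_iff R m y).2 hym
    · intro f hf
      obtain ⟨b, s, rfl⟩ := IsLocalization.exists_mk'_eq m.primeCompl f
      have hb : b ∈ m := (IsLocalization.AtPrime.mk'_mem_maximal_iff R m b s).1 hf
      obtain ⟨g, hg⟩ := hm b hb
      refine ⟨IsLocalization.mk' R g s, ?_⟩
      rw [IsLocalization.mul_mk'_eq_mk'_of_mul, IsLocalization.mul_mk'_eq_mk'_of_mul, hg]
    · intro f hf
      obtain ⟨b, s, rfl⟩ := IsLocalization.exists_mk'_eq m.primeCompl f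
      rw [IsLocalization.mul_mk'_eq_mk'_of_mul, IsLocalization.eq_mk'_iff_mul_eq, ← map_mul,
        IsLocalization.eq_iff_exists m.primeCompl] at hf
      obtain ⟨c, hc⟩ := hf
      -- clear denominators: `t * u ∈ (y)` with `t` a unit modulo `m`, while `m * u ⊆ (y)`
      have ht : (c * s : T) ∉ m := (c * s).2
      obtain ⟨z, hz⟩ := Ideal.Quotient.exists_inv (I := m)
        (a := Ideal.Quotient.mk m (c * s : T)) (fun h => ht (Ideal.Quotient.eq_zero_iff_mem.1 h))
      obtain ⟨z, rfl⟩ := Ideal.Quotient.mk_surjective z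
      rw [← map_mul, ← map_one (Ideal.Quotient.mk m), Ideal.Quotient.mk_eq_mk_iff_sub_mem] at hz
      obtain ⟨g, hg⟩ := hm _ hz
      exact hu (c * b * z - g) (by linear_combination z * hc + hg)
  have h3 : (2 : ℕ∞) ≤ 1 := h2.trans (heq ▸ h1)
  exact absurd h3 (by norm_num)

/-- The criterion for `T = ℂ[∂]/J` at the origin, with `u = ∂₁∂₃` and `y = ∂₂`. The chain of
primes comes from a homomorphism `f` to `ℂ[s, t]` that kills `J`: it consists of the kernels of
`f`, of `f` followed by `t ↦ 0`, and of `f` followed by evaluation at the origin. -/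
theorem not_isCohenMacaulayRing_quotient (J : Ideal (MvPolynomial (Fin 4) ℂ))
    (hreg : ∀ g, X 1 * g ∈ J → g ∈ J)
    (hu : ∀ g, X 0 * X 2 - X 1 * g ∉ J)
    (hs : ∀ i, ∃ g, X 1 * g - X 0 * X 2 * X i ∈ J)
    (f : MvPolynomial (Fin 4) ℂ →ₐ[ℂ] MvPolynomial (Fin 2) ℂ)
    (hJf : ∀ g ∈ J, f g = 0)
    (hf0 : ∀ i, constantCoeff (f (X i)) = 0)
    (a b : MvPolynomial (Fin 4) ℂ) (ha : f a ≠ 0)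
    (ha' : aeval ![(X 0 : MvPolynomial (Fin 2) ℂ), 0] (f a) = 0)
    (hb : aeval ![(X 0 : MvPolynomial (Fin 2) ℂ), 0] (f b) ≠ 0)
    (hb' : constantCoeff (f b) = 0) :
    ¬ IsCohenMacaulayRing (MvPolynomial (Fin 4) ℂ ⧸ J) := by
  let F₀ : (MvPolynomial (Fin 4) ℂ ⧸ J) →+* MvPolynomial (Fin 2) ℂ :=
    Ideal.Quotient.lift J f.toRingHom hJf
  let κ : MvPolynomial (Fin 2) ℂ →+* MvPolynomial (Fin 2) ℂ :=
    (aeval ![(X 0 : MvPolynomial (Fin 2) ℂ), 0]).toRingHom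
  let F₁ := κ.comp F₀
  let F₂ : (MvPolynomial (Fin 4) ℂ ⧸ J) →+* ℂ := (constantCoeff).comp F₀
  have hconst : ∀ g : MvPolynomial (Fin 4) ℂ, constantCoeff (f g) = constantCoeff g := by
    intro g
    induction g using MvPolynomial.induction_on with
    | C c => simp
    | add p q hp hq => simp [hp, hq]
    | mul_X p i hp => simp [hf0]
  have hκ : ∀ p, constantCoeff (κ p) = constantCoeff p := by
    intro p
    induction p using MvPolynomial.induction_on with
    | C c => simp [κ]
    | add p q hp hq => simp [hp, hq]
    | mul_X p i hp => fin_cases i <;> simp [κ]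
  have hF₂ : Function.Surjective F₂ := fun c => ⟨Ideal.Quotient.mk J (C c), by simp [F₂, F₀]⟩
  have : (RingHom.ker F₂).IsMaximal := RingHom.ker_isMaximal_of_surjective F₂ hF₂
  have : (RingHom.ker F₀).IsPrime := RingHom.ker_isPrime F₀
  have : (RingHom.ker F₁).IsPrime := RingHom.ker_isPrime F₁
  -- `∂₁∂₃` times the maximal ideal lies in the ideal generated by `∂₂`, modulo `J`
  have hsoc : ∀ g : MvPolynomial (Fin 4) ℂ,
      ∃ h, X 1 * h - X 0 * X 2 * (g - C (constantCoeff g)) ∈ J := by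
    intro g
    induction g using MvPolynomial.induction_on with
    | C c => exact ⟨0, by simp⟩
    | add p q hp hq =>
      obtain ⟨h, hh⟩ := hp
      obtain ⟨k, hk⟩ := hq
      refine ⟨h + k, ?_⟩
      convert J.add_mem hh hk using 1
      simp only [map_add]; ring
    | mul_X p i hp =>
      obtain ⟨h, hh⟩ := hs i
      refine ⟨p * h, ?_⟩
      convert J.mul_mem_left p hh using 1
      simp; ring
  refine not_isCohenMacaulayRing_of_socle _ (RingHom.ker F₂) (Ideal.Quotient.mk J (X 1))
    (Ideal.Quotient.mk J (X 0 * X 2)) ?_ ?_ ?_ ?_ (RingHom.ker F₀) (RingHom.ker F₁) ?_ ?_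
  · exact hf0 1
  · intro g hg
    obtain ⟨g, rfl⟩ := Ideal.Quotient.mk_surjective g
    rw [← map_mul, Ideal.Quotient.eq_zero_iff_mem] at hg
    exact Ideal.Quotient.eq_zero_iff_mem.2 (hreg g hg)
  · intro g hg
    obtain ⟨g, rfl⟩ := Ideal.Quotient.mk_surjective g
    have hg0 : constantCoeff g = 0 := (hconst g).symm.trans hg
    obtain ⟨h, hh⟩ := hsoc g
    refine ⟨Ideal.Quotient.mk J h, ?_⟩
    rw [← map_mul, ← map_mul, Ideal.Quotient.mk_eq_mk_iff_sub_mem]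
    simpa [hg0] using hh
  · intro g hg
    obtain ⟨g, rfl⟩ := Ideal.Quotient.mk_surjective g
    rw [← map_mul, Ideal.Quotient.mk_eq_mk_iff_sub_mem] at hg
    exact hu g hg
  · refine lt_of_le_of_ne (fun g hg => ?_) (fun h => ha ?_)
    · change κ (F₀ g) = 0
      rw [RingHom.mem_ker.1 hg, map_zero]
    · have : Ideal.Quotient.mk J a ∈ RingHom.ker F₀ := h ▸ ha'
      exact this
  · refine lt_of_le_of_ne (fun g hg => ?_) (fun h => hb ?_)
    · change constantCoeff (F₀ g) = 0
      rw [← hκ]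
      have : κ (F₀ g) = 0 := hg
      rw [this, map_zero]
    · have : Ideal.Quotient.mk J b ∈ RingHom.ker F₁ := h ▸ hb'
      exact this

/-! ### Ideals given by sums over fibres -/

/-- The image `Au` of an exponent vector `u`, with natural number coordinates. -/
def sdeg (u : Fin 4 →₀ ℕ) : ℕ × ℕ := (u 1 + 2 * u 2 + 3 * u 3, u 0 + u 1)

open Classical in
/-- The linear map sending `∂^u` to the basis vector at `Au` if `P u` holds, and to zero
otherwise. Its coefficient at `s` is the sum of the coefficients at those `u` in the fibre of `s`
which satisfy `P`. -/
def fiberSum (P : (Fin 4 →₀ ℕ) → Prop) : MvPolynomial (Fin 4) ℂ →ₗ[ℂ] (ℕ × ℕ →₀ ℂ) :=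
  (MvPolynomial.basisMonomials (Fin 4) ℂ).constr ℂ
    fun u => if P u then Finsupp.single (sdeg u) 1 else 0

open Classical in
theorem fiberSum_monomial (P : (Fin 4 →₀ ℕ) → Prop) (u : Fin 4 →₀ ℕ) (c : ℂ) :
    fiberSum P (monomial u c) = if P u then Finsupp.single (sdeg u) c else 0 := by
  have h : monomial u c = c • MvPolynomial.basisMonomials (Fin 4) ℂ u := by
    simp [smul_monomial]
  rw [h, map_smul, fiberSum, Module.Basis.constr_basis]
  split_ifs <;> simp

open Classical in
theorem fiberSum_apply (P : (Fin 4 →₀ ℕ) → Prop) (f : MvPolynomial (Fin 4) ℂ) (s : ℕ × ℕ) :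
    fiberSum P f s = ∑ u ∈ f.support, if P u ∧ sdeg u = s then f.coeff u else 0 := by
  conv_lhs => rw [f.as_sum, map_sum, Finsupp.finsetSum_apply]
  refine Finset.sum_congr rfl fun u _ => ?_
  rw [fiberSum_monomial]
  by_cases h : P u <;> simp [h, Finsupp.single_apply]

theorem linearMap_ext_monomial {M : Type*} [AddCommGroup M] [Module ℂ M]
    {φ ψ : MvPolynomial (Fin 4) ℂ →ₗ[ℂ] M}
    (h : ∀ u, φ (monomial u 1) = ψ (monomial u 1)) (g) : φ g = ψ g := by
  have : φ = ψ := (MvPolynomial.basisMonomials (Fin 4) ℂ).ext fun u => by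
    simpa using h u
  rw [this]

/-- Conditions on `P` under which the kernel of `fiberSum P` is an ideal modulo which `∂₂` is
regular. -/
structure GoodPred (P : (Fin 4 →₀ ℕ) → Prop) : Prop where
  of_add : ∀ u w, P (u + w) → P u
  congr : ∀ u v w, P u → P v → sdeg u = sdeg v → P (u + w) → P (v + w)
  add_one : ∀ u, P u → P (u + Finsupp.single 1 1)

theorem sdeg_add (u v : Fin 4 →₀ ℕ) : sdeg (u + v) = sdeg u + sdeg v := by
  ext <;> simp [sdeg] <;> ring

open Classical in
theorem GoodPred.fiberSum_mul {P : (Fin 4 →₀ ℕ) → Prop} (hP : GoodPred P)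
    (g h : MvPolynomial (Fin 4) ℂ) (hg : fiberSum P g = 0) : fiberSum P (h * g) = 0 := by
  induction h using MvPolynomial.induction_on' with
  | add p q hp hq => rw [add_mul, map_add, hp, hq, add_zero]
  | monomial w c =>
    -- multiplication by `∂^w` descends to a shift of the fibres
    let T : (ℕ × ℕ →₀ ℂ) →ₗ[ℂ] (ℕ × ℕ →₀ ℂ) :=
      Finsupp.lsum ℂ fun s =>
        if ∃ u, P u ∧ sdeg u = s ∧ P (u + w) then c • Finsupp.lsingle (s + sdeg w) else 0
    have key := linearMap_ext_monomial
      (φ := (fiberSum P).comp (LinearMap.mulLeft ℂ (monomial w c)))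
      (ψ := T.comp (fiberSum P)) (fun u => ?_) g
    · simpa [hg] using key
    · simp only [LinearMap.comp_apply, LinearMap.mulLeft_apply, monomial_mul, mul_one,
        fiberSum_monomial]
      by_cases h1 : P (u + w)
      · have h2 : P u := hP.of_add u w h1
        have h3 : ∃ v, P v ∧ sdeg v = sdeg u ∧ P (v + w) := ⟨u, h2, rfl, h1⟩
        rw [add_comm w u, if_pos h1, if_pos h2]
        simp [T, h3, sdeg_add]
      · rw [add_comm w u, if_neg h1]
        by_cases h2 : P u
        · have h3 : ¬ ∃ v, P v ∧ sdeg v = sdeg u ∧ P (v + w) := by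
            rintro ⟨v, h4, h5, h6⟩
            exact h1 (hP.congr v u w h4 h2 h5 h6)
          simp [T, h2, h3]
        · simp [h2]

open Classical in
/-- An ideal contains the kernel of `fiberSum P` once it contains the monomials violating `P` and
the differences of monomials in a common fibre: modulo the ideal, a polynomial then depends only on
its fibre sums. -/
theorem mem_of_fiberSum_eq_zero {P : (Fin 4 →₀ ℕ) → Prop} (J : Ideal (MvPolynomial (Fin 4) ℂ))
    (h₁ : ∀ u, ¬ P u → monomial u 1 ∈ J)
    (h₂ : ∀ u v, P u → P v → sdeg u = sdeg v → monomial u 1 - monomial v 1 ∈ J)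
    (g : MvPolynomial (Fin 4) ℂ) (hg : fiberSum P g = 0) : g ∈ J := by
  -- a chosen exponent vector in each fibre; the value on fibres without any is irrelevant
  let rep : ℕ × ℕ → (Fin 4 →₀ ℕ) := fun s =>
    if h : ∃ u, P u ∧ sdeg u = s then h.choose else 0
  let σ : (ℕ × ℕ →₀ ℂ) →ₗ[ℂ] (MvPolynomial (Fin 4) ℂ ⧸ J) :=
    Finsupp.lsum ℂ fun s => (LinearMap.toSpanSingleton ℂ _ (Ideal.Quotient.mk J (monomial (rep s) 1)))
  have key := linearMap_ext_monomial
    (φ := (Ideal.Quotient.mkₐ ℂ J).toLinearMap) (ψ := σ.comp (fiberSum P)) (fun u => ?_) g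
  · rw [← Ideal.Quotient.eq_zero_iff_mem]
    simpa [hg] using key
  · simp only [LinearMap.comp_apply, AlgHom.toLinearMap_apply, Ideal.Quotient.mkₐ_eq_mk,
        fiberSum_monomial]
    by_cases h : P u
    · have h3 : ∃ v, P v ∧ sdeg v = sdeg u := ⟨u, h, rfl⟩
      have h4 : rep (sdeg u) = h3.choose := dif_pos h3
      have h5 := h3.choose_spec
      rw [if_pos h]
      simp only [σ, Finsupp.lsum_single, LinearMap.toSpanSingleton_apply, one_smul]
      rw [Ideal.Quotient.mk_eq_mk_iff_sub_mem, h4]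
      exact h₂ _ _ h h5.1 h5.2.symm
    · rw [if_neg h, map_zero, Ideal.Quotient.eq_zero_iff_mem]
      exact h₁ u h

theorem GoodPred.fiberSum_X_one_mul {P : (Fin 4 →₀ ℕ) → Prop} (hP : GoodPred P)
    (g : MvPolynomial (Fin 4) ℂ) :
    fiberSum P (X 1 * g) = Finsupp.mapDomain (· + (1, 1)) (fiberSum P g) := by
  refine linearMap_ext_monomial
      (φ := (fiberSum P).comp (LinearMap.mulLeft ℂ (X 1)))
      (ψ := (Finsupp.lmapDomain ℂ ℂ (· + (1, 1))).comp (fiberSum P)) (fun u => ?_) g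
  simp only [LinearMap.comp_apply, LinearMap.mulLeft_apply, X, monomial_mul, mul_one,
        fiberSum_monomial]
  rw [add_comm]
  by_cases h : P u
  · have h1 : sdeg (Finsupp.single 1 1) = (1, 1) := by simp [sdeg]
    rw [if_pos h, if_pos (hP.add_one u h), sdeg_add, h1]
    simp
  · rw [if_neg h, if_neg (fun h' => h (hP.of_add _ _ h')), map_zero]

/-- The hole: `(1, 0)` is not in the semigroup generated by the columns. -/
theorem fiberSum_one_zero (P : (Fin 4 →₀ ℕ) → Prop) (g : MvPolynomial (Fin 4) ℂ) :
    fiberSum P g (1, 0) = 0 := by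
  rw [fiberSum_apply]
  refine Finset.sum_eq_zero fun u _ => if_neg ?_
  rintro ⟨-, h⟩
  simp only [sdeg, Prod.mk.injEq] at h
  rcases Nat.eq_zero_or_pos (u 3) with h3 | h3 <;> omega

/-- The exponent vector with prescribed entries. -/
def ex (a b c d : ℕ) : Fin 4 →₀ ℕ := Finsupp.equivFunOnFinite.symm ![a, b, c, d]

@[simp] theorem ex_zero (a b c d : ℕ) : ex a b c d 0 = a := rfl
@[simp] theorem ex_one (a b c d : ℕ) : ex a b c d 1 = b := rfl
@[simp] theorem ex_two (a b c d : ℕ) : ex a b c d 2 = c := rfl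
@[simp] theorem ex_three (a b c d : ℕ) : ex a b c d 3 = d := rfl

theorem monomial_eq_prod (u : Fin 4 →₀ ℕ) (c : ℂ) :
    (monomial u c : MvPolynomial (Fin 4) ℂ) =
      C c * (X 0 ^ u 0 * X 1 ^ u 1 * X 2 ^ u 2 * X 3 ^ u 3) := by
  rw [monomial_eq, Finsupp.prod_fintype _ _ (by simp), Fin.prod_univ_four]

/-- The criterion for an ideal `J` that is the kernel of `fiberSum P`; `hs` records that each
`∂₁∂₃∂ᵢ` is zero or a multiple of `∂₂` modulo `J`, and `hfL` that `f` factors through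
`fiberSum P`. -/
theorem not_isCohenMacaulayRing_of_fiberSum {P : (Fin 4 →₀ ℕ) → Prop} (hP : GoodPred P)
    (J : Ideal (MvPolynomial (Fin 4) ℂ)) (hJ : ∀ g ∈ J, fiberSum P g = 0)
    (h₁ : ∀ u, ¬ P u → monomial u 1 ∈ J)
    (h₂ : ∀ u v, P u → P v → sdeg u = sdeg v → monomial u 1 - monomial v 1 ∈ J)
    (hxz : P (ex 1 0 1 0))
    (hs : ∀ i, ¬ P (ex 1 0 1 0 + Finsupp.single i 1) ∨
      ∃ v, P (v + Finsupp.single 1 1) ∧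
        sdeg (v + Finsupp.single 1 1) = sdeg (ex 1 0 1 0 + Finsupp.single i 1))
    (f : MvPolynomial (Fin 4) ℂ →ₐ[ℂ] MvPolynomial (Fin 2) ℂ)
    (L : (ℕ × ℕ →₀ ℂ) →ₗ[ℂ] MvPolynomial (Fin 2) ℂ)
    (hfL : ∀ u, f (monomial u 1) = L (fiberSum P (monomial u 1)))
    (hf0 : ∀ i, constantCoeff (f (X i)) = 0)
    (a b : MvPolynomial (Fin 4) ℂ) (ha : f a ≠ 0)
    (ha' : aeval ![(X 0 : MvPolynomial (Fin 2) ℂ), 0] (f a) = 0)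
    (hb : aeval ![(X 0 : MvPolynomial (Fin 2) ℂ), 0] (f b) ≠ 0)
    (hb' : constantCoeff (f b) = 0) :
    ¬ IsCohenMacaulayRing (MvPolynomial (Fin 4) ℂ ⧸ J) := by
  have hxz' : (X 0 * X 2 : MvPolynomial (Fin 4) ℂ) = monomial (ex 1 0 1 0) 1 := by
    rw [monomial_eq_prod]; simp
  refine not_isCohenMacaulayRing_quotient J ?_ ?_ ?_ f ?_ hf0 a b ha ha' hb hb'
  · intro g hg
    refine mem_of_fiberSum_eq_zero J h₁ h₂ g ?_
    have h := hJ _ hg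
    rw [hP.fiberSum_X_one_mul] at h
    exact Finsupp.mapDomain_injective (add_left_injective _) (h.trans Finsupp.mapDomain_zero.symm)
  · -- compare coefficients at `(2, 1) = (1, 0) + a₂`: only `∂₁∂₃` contributes there
    intro g hg
    have h := DFunLike.congr_fun (hJ _ hg) ((1, 0) + (1, 1))
    rw [map_sub, hP.fiberSum_X_one_mul, Finsupp.sub_apply,
      Finsupp.mapDomain_apply (add_left_injective _), fiberSum_one_zero, hxz', fiberSum_monomial,
      if_pos hxz] at h
    simp [sdeg] at h
  · intro i
    have hi : (X 0 * X 2 * X i : MvPolynomial (Fin 4) ℂ) =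
        monomial (ex 1 0 1 0 + Finsupp.single i 1) 1 := by
      rw [hxz', X, monomial_mul, mul_one]
    rw [hi]
    by_cases hPi : P (ex 1 0 1 0 + Finsupp.single i 1)
    · obtain h | ⟨v, hv, hv'⟩ := hs i
      · exact absurd hPi h
      · refine ⟨monomial v 1, ?_⟩
        rw [X, monomial_mul, mul_one, add_comm]
        exact h₂ _ _ hv hPi hv'
    · exact ⟨0, by simpa using h₁ _ hPi⟩
  · intro g hg
    have := linearMap_ext_monomial (φ := f.toLinearMap) (ψ := L.comp (fiberSum P)) hfL g
    simpa [hJ g hg] using this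

/-! ### Minimal degrees in the fibres -/

/-- The total degree `|u|` of an exponent vector. -/
def tdeg (u : Fin 4 →₀ ℕ) : ℕ := u 0 + u 1 + u 2 + u 3

theorem wt_le_iff (u v : Fin 4 →₀ ℕ) :
    wt (fun _ => 1) v ≤ wt (fun _ => 1) u ↔ tdeg v ≤ tdeg u := by
  simp only [wt, tdeg, Fin.sum_univ_four, one_mul]
  norm_cast

theorem mulVec_eq_iff (u v : Fin 4 →₀ ℕ) :
    (!![0, 1, 2, 3; 1, 1, 0, 0] : Matrix (Fin 2) (Fin 4) ℤ).mulVec (fun j => (u j : ℤ)) =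
      (!![0, 1, 2, 3; 1, 1, 0, 0] : Matrix (Fin 2) (Fin 4) ℤ).mulVec (fun j => (v j : ℤ)) ↔
    sdeg u = sdeg v := by
  simp only [funext_iff, Fin.forall_fin_two, Matrix.mulVec, dotProduct, Fin.sum_univ_four,
    sdeg, Prod.mk.injEq]
  simp
  omega

/-- The minimal total degree of an exponent vector in the fibre of `s = (i, j)`, namely
`j + ⌈max(i - j, 0) / 3⌉`. Truncated subtraction supplies the maximum with zero. -/
def tightDeg (s : ℕ × ℕ) : ℕ := s.2 + (s.1 - s.2 + 2) / 3

/-- The exponent vector `u` has minimal total degree in its fibre. -/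
def Tight (u : Fin 4 →₀ ℕ) : Prop := tightDeg (sdeg u) = tdeg u

theorem tightDeg_le (u : Fin 4 →₀ ℕ) : tightDeg (sdeg u) ≤ tdeg u := by
  simp only [tightDeg, sdeg, tdeg]
  omega

theorem exists_tight (u : Fin 4 →₀ ℕ) : ∃ v, Tight v ∧ sdeg v = sdeg u := by
  obtain ⟨i, j, hij⟩ : ∃ i j, sdeg u = (i, j) := ⟨_, _, rfl⟩
  have hi : i = u 1 + 2 * u 2 + 3 * u 3 := (congrArg Prod.fst hij).symm
  have hj : j = u 0 + u 1 := (congrArg Prod.snd hij).symm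
  rw [hij]
  have hcase : i ≤ j ∨ (j < i ∧ (i - j) % 3 = 0) ∨ (j < i ∧ (i - j) % 3 = 2) ∨
      (j + 4 ≤ i ∧ (i - j) % 3 = 1) ∨ (i = j + 1) := by omega
  rcases hcase with h | h | h | h | h
  · refine ⟨ex (j - i) i 0 0, ?_, ?_⟩ <;> simp [Tight, tightDeg, tdeg, sdeg]; omega
  · refine ⟨ex 0 j 0 ((i - j) / 3), ?_, ?_⟩ <;> simp [Tight, tightDeg, tdeg, sdeg] <;> omega
  · refine ⟨ex 0 j 1 ((i - j) / 3), ?_, ?_⟩ <;> simp [Tight, tightDeg, tdeg, sdeg] <;> omega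
  · refine ⟨ex 0 j 2 ((i - j - 4) / 3), ?_, ?_⟩ <;> simp [Tight, tightDeg, tdeg, sdeg] <;> omega
  -- with `j = 0` this would be the hole `(1, 0)`
  · have hj1 : 1 ≤ j := by
      rcases Nat.eq_zero_or_pos (u 3) with h3 | h3 <;> omega
    refine ⟨ex 1 (j - 1) 1 0, ?_, ?_⟩ <;> simp [Tight, tightDeg, tdeg, sdeg] <;> omega

theorem goodPred_true : GoodPred fun _ => True := ⟨by simp, by simp, by simp⟩

theorem tdeg_add (u v : Fin 4 →₀ ℕ) : tdeg (u + v) = tdeg u + tdeg v := by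
  simp [tdeg]; ring

theorem goodPred_tight : GoodPred Tight where
  of_add u w h := by
    simp only [Tight, tightDeg, sdeg, tdeg, Finsupp.add_apply] at h ⊢
    omega
  congr u v w hu hv h huw := by
    simp only [Tight, sdeg_add, tdeg_add] at *
    rw [← h, huw, ← hu, ← hv, h]
  add_one u h := by
    simp [Tight, tightDeg, sdeg, tdeg] at h ⊢
    omega

/-! ### The toric ideal and its initial ideal as kernels -/

theorem fiberSum_true_of_mem (g : MvPolynomial (Fin 4) ℂ)
    (hg : g ∈ toricIdeal (!![0, 1, 2, 3; 1, 1, 0, 0] : Matrix (Fin 2) (Fin 4) ℤ)) :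
    fiberSum (fun _ => True) g = 0 := by
  induction hg using Submodule.span_induction with
  | mem x hx =>
    obtain ⟨u, v, huv, rfl⟩ := hx
    rw [mulVec_eq_iff] at huv
    simp [fiberSum_monomial, huv]
  | zero => simp
  | add x y _ _ hx hy => rw [map_add, hx, hy, add_zero]
  | smul c x _ hx => exact goodPred_true.fiberSum_mul x c hx

theorem coeff_initialForm (f : MvPolynomial (Fin 4) ℂ) (u : Fin 4 →₀ ℕ)
    [Decidable (∀ v ∈ f.support, tdeg v ≤ tdeg u)] :
    coeff u (initialForm (fun _ => 1) f) =
      if ∀ v ∈ f.support, tdeg v ≤ tdeg u then coeff u f else 0 := by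
  classical
  simp only [initialForm, wt_le_iff, coeff_sum, coeff_monomial, Finset.sum_ite_eq',
    Finset.mem_filter]
  by_cases h : ∀ v ∈ f.support, tdeg v ≤ tdeg u
  · by_cases h' : u ∈ f.support
    · rw [if_pos ⟨h', h⟩, if_pos h]
    · rw [if_neg (fun h'' => h' h''.1), if_pos h, notMem_support_iff.1 h']
  · rw [if_neg (fun h'' => h h''.2), if_neg h]

/-- In a fibre where `in(f)` has a term of minimal degree, the maximal degree of `f` equals the
minimal degree of the fibre, so all terms of `f` in the fibre belong to `in(f)` and their
coefficients sum to zero. -/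
theorem fiberSum_initialForm (f : MvPolynomial (Fin 4) ℂ)
    (hf : fiberSum (fun _ => True) f = 0) : fiberSum Tight (initialForm (fun _ => 1) f) = 0 := by
  classical
  ext s
  let top : (Fin 4 →₀ ℕ) → Prop := fun u => ∀ v ∈ f.support, tdeg v ≤ tdeg u
  have h1 : fiberSum Tight (initialForm (fun _ => 1) f) s =
      ∑ u ∈ f.support, if top u ∧ Tight u ∧ sdeg u = s then f.coeff u else 0 := by
    rw [fiberSum_apply]
    have hsub : (initialForm (fun _ => 1) f).support ⊆ f.support := fun u hu => by
      rw [mem_support_iff, coeff_initialForm] at hu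
      rw [mem_support_iff]
      exact fun h => hu (by rw [h, ite_self])
    rw [Finset.sum_subset hsub]
    · refine Finset.sum_congr rfl fun u _ => ?_
      rw [coeff_initialForm]
      rw [← ite_and]
      exact if_congr and_comm rfl rfl
    · intro u _ hu
      rw [notMem_support_iff.1 hu, ite_self]
  rw [h1]
  by_cases hex : ∃ u, top u ∧ Tight u ∧ sdeg u = s
  · -- every term of `f` in this fibre has the same degree as `u`, hence survives
    obtain ⟨u, hu, hut, hus⟩ := hex
    have h2 := DFunLike.congr_fun hf s
    rw [fiberSum_apply] at h2
    rw [Finsupp.zero_apply] at h2 ⊢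
    rw [← h2]
    refine Finset.sum_congr rfl fun v hv => ?_
    congr 1
    simp only [true_and, eq_iff_iff]
    refine ⟨fun h => h.2.2, fun h => ?_⟩
    have h3 := hu v hv
    have h4 := tightDeg_le v
    have h5 : tightDeg s = tdeg u := hus ▸ hut
    rw [h] at h4
    refine ⟨fun w hw => (hu w hw).trans (h5 ▸ h4), ?_, h⟩
    rw [Tight, h]
    omega
  · exact Finset.sum_eq_zero fun u _ => if_neg fun h => hex ⟨u, h⟩

theorem fiberSum_tight_of_mem (g : MvPolynomial (Fin 4) ℂ)
    (hg : g ∈ initialIdeal (fun _ => 1)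
      (toricIdeal (!![0, 1, 2, 3; 1, 1, 0, 0] : Matrix (Fin 2) (Fin 4) ℤ))) :
    fiberSum Tight g = 0 := by
  induction hg using Submodule.span_induction with
  | mem x hx =>
    obtain ⟨f, hf, -, rfl⟩ := hx
    exact fiberSum_initialForm f (fiberSum_true_of_mem f hf)
  | zero => simp
  | add x y _ _ hx hy => rw [map_add, hx, hy, add_zero]
  | smul c x _ hx => exact goodPred_tight.fiberSum_mul x c hx

theorem binomial_mem_toricIdeal (u v : Fin 4 →₀ ℕ) (h : sdeg u = sdeg v) :
    monomial u 1 - monomial v 1 ∈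
      toricIdeal (!![0, 1, 2, 3; 1, 1, 0, 0] : Matrix (Fin 2) (Fin 4) ℤ) :=
  Ideal.subset_span ⟨u, v, (mulVec_eq_iff u v).2 h, rfl⟩

theorem support_binomial (u v : Fin 4 →₀ ℕ) (h : u ≠ v) :
    (monomial u 1 - monomial v 1 : MvPolynomial (Fin 4) ℂ).support = {u, v} := by
  classical
  ext w
  simp only [mem_support_iff, coeff_sub, coeff_monomial, Finset.mem_insert, Finset.mem_singleton]
  by_cases h1 : u = w <;> by_cases h2 : v = w <;> simp_all [eq_comm]

/-- Such a monomial is the initial form of its difference with a monomial of minimal degree. -/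
theorem monomial_mem_initialIdeal (u : Fin 4 →₀ ℕ) (hu : ¬ Tight u) :
    monomial u 1 ∈ initialIdeal (fun _ => 1)
      (toricIdeal (!![0, 1, 2, 3; 1, 1, 0, 0] : Matrix (Fin 2) (Fin 4) ℤ)) := by
  classical
  obtain ⟨v, hv, hvu⟩ := exists_tight u
  have hne : u ≠ v := by rintro rfl; exact hu hv
  have hlt : tdeg v < tdeg u := by
    have h1 := tightDeg_le u
    rw [Tight, hvu] at hv
    rw [Tight] at hu
    omega
  refine Ideal.subset_span ⟨_, binomial_mem_toricIdeal u v hvu.symm, fun h => ?_, ?_⟩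
  · have := support_binomial u v hne
    rw [h, support_zero] at this
    exact absurd this.symm (by simp)
  · ext w
    rw [coeff_initialForm, support_binomial u v hne]
    simp only [Finset.mem_insert, Finset.mem_singleton, forall_eq_or_imp, forall_eq, coeff_sub,
      coeff_monomial]
    by_cases h1 : u = w
    · subst h1
      simp [hne.symm, hlt.le]
    · by_cases h2 : v = w
      · subst h2
        simp [h1, hlt]
      · simp [h1, h2]

theorem binomial_mem_initialIdeal (u v : Fin 4 →₀ ℕ) (hu : Tight u) (hv : Tight v)
    (h : sdeg u = sdeg v) :
    monomial u 1 - monomial v 1 ∈ initialIdeal (fun _ => 1)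
      (toricIdeal (!![0, 1, 2, 3; 1, 1, 0, 0] : Matrix (Fin 2) (Fin 4) ℤ)) := by
  classical
  rcases eq_or_ne u v with rfl | hne
  · simp
  have heq : tdeg u = tdeg v := by rw [← hu, ← hv, h]
  refine Ideal.subset_span ⟨_, binomial_mem_toricIdeal u v h, fun h => ?_, ?_⟩
  · have := support_binomial u v hne
    rw [h, support_zero] at this
    exact absurd this.symm (by simp)
  · ext w
    rw [coeff_initialForm, support_binomial u v hne]
    simp only [Finset.mem_insert, Finset.mem_singleton, forall_eq_or_imp, forall_eq, coeff_sub,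
      coeff_monomial]
    by_cases h1 : u = w
    · subst h1
      simp [hne.symm, heq]
    · by_cases h2 : v = w
      · subst h2
        simp [h1, heq]
      · simp [h1, h2]

/-! ### The two quotients -/

/-- The chain of primes comes from the parametrization `(t, st, s², s³)`. -/
theorem toricQuotient_not_isCohenMacaulay : ¬ IsCohenMacaulayRing (MvPolynomial (Fin 4) ℂ ⧸
    toricIdeal (!![0, 1, 2, 3; 1, 1, 0, 0] : Matrix (Fin 2) (Fin 4) ℤ)) := by
  refine not_isCohenMacaulayRing_of_fiberSum goodPred_true _ fiberSum_true_of_mem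
    (by simp) (fun u v _ _ => binomial_mem_toricIdeal u v) trivial ?_
    (aeval ![X 1, X 0 * X 1, X 0 ^ 2, X 0 ^ 3])
    (Finsupp.lsum ℂ fun s => LinearMap.toSpanSingleton ℂ _ (X 0 ^ s.1 * X 1 ^ s.2))
    ?_ ?_ (X 0) (X 2) ?_ ?_ ?_ ?_
  · intro i
    refine .inr ?_
    fin_cases i
    · exact ⟨ex 0 1 0 0, trivial, by simp [sdeg]⟩
    · exact ⟨ex 1 0 1 0, trivial, by simp [sdeg]⟩
    · exact ⟨ex 0 0 0 1, trivial, by simp [sdeg]⟩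
    · exact ⟨ex 0 0 2 0, trivial, by simp [sdeg]⟩
  · intro u
    rw [fiberSum_monomial, if_pos trivial, monomial_eq_prod]
    simp [sdeg]
    ring
  · intro i
    fin_cases i <;> simp
  · simp
  · simp
  · simp
  · simp

/-- The variety of `in(I_A)` contains the plane `∂₁ = ∂₃ = 0`, parametrized by `(0, t, 0, s)`; the
chain of primes lives on it. -/
theorem initialQuotient_not_isCohenMacaulay : ¬ IsCohenMacaulayRing (MvPolynomial (Fin 4) ℂ ⧸
    initialIdeal (fun _ => 1)
      (toricIdeal (!![0, 1, 2, 3; 1, 1, 0, 0] : Matrix (Fin 2) (Fin 4) ℤ))) := by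
  refine not_isCohenMacaulayRing_of_fiberSum goodPred_tight _ fiberSum_tight_of_mem
    monomial_mem_initialIdeal binomial_mem_initialIdeal (by simp [Tight, tightDeg, sdeg, tdeg]) ?_
    (aeval ![0, X 1, 0, X 0])
    (Finsupp.lsum ℂ fun s => if s.2 ≤ s.1 ∧ 3 ∣ s.1 - s.2 then
      LinearMap.toSpanSingleton ℂ _ (X 0 ^ ((s.1 - s.2) / 3) * X 1 ^ s.2) else 0)
    ?_ ?_ (X 1) (X 3) ?_ ?_ ?_ ?_
  · intro i
    fin_cases i
    · exact .inl (by simp [Tight, tightDeg, sdeg, tdeg])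
    · exact .inr ⟨ex 1 0 1 0, by simp [Tight, tightDeg, sdeg, tdeg], by simp [sdeg]⟩
    · exact .inl (by simp [Tight, tightDeg, sdeg, tdeg])
    · exact .inr ⟨ex 0 0 2 0, by simp [Tight, tightDeg, sdeg, tdeg], by simp [sdeg]⟩
  · intro u
    rw [fiberSum_monomial, monomial_eq_prod]
    -- the tight vectors with `u 0 = u 2 = 0`
    -- are the only tight ones in the fibres over `(b + 3 * c, b)`
    by_cases h02 : u 0 = 0 ∧ u 2 = 0
    · obtain ⟨h0, h2⟩ := h02
      have hT : Tight u := by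
        simp only [Tight, tightDeg, sdeg, tdeg]
        omega
      have e1 : u 1 + 3 * u 3 - u 1 = 3 * u 3 := by omega
      rw [if_pos hT]
      simp [sdeg, h0, h2]
      ring
    · have hz : (0 : MvPolynomial (Fin 2) ℂ) ^ u 0 * X 1 ^ u 1 * 0 ^ u 2 * X 0 ^ u 3 = 0 := by
        rcases not_and_or.1 h02 with h | h <;> simp [h]
      by_cases hT : Tight u
      · have hcond : ¬ ((sdeg u).2 ≤ (sdeg u).1 ∧ 3 ∣ (sdeg u).1 - (sdeg u).2) := by
          simp only [Tight, tightDeg, sdeg, tdeg] at hT ⊢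
          omega
        rw [if_pos hT, Finsupp.lsum_single, if_neg hcond]
        simpa using hz
      · rw [if_neg hT]
        simpa using hz
  · intro i
    fin_cases i <;> simp
  · simp
  · simp
  · simp
  · simp

/-- Row 2 of the table in Example 7.6 (columns `(0,1),(1,1),(2,0),(3,0)`): neither `ℂ[∂]/I_A` nor `ℂ[∂]/in(I_A)` is Cohen–Macaulay. -/
theorem stmt11 :
    ¬ IsCohenMacaulayRing (MvPolynomial (Fin 4) ℂ ⧸ toricIdeal (!![0, 1, 2, 3; 1, 1, 0, 0] : Matrix (Fin 2) (Fin 4) ℤ)) ∧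
    ¬ IsCohenMacaulayRing (MvPolynomial (Fin 4) ℂ ⧸ initialIdeal (fun _ => 1) (toricIdeal (!![0, 1, 2, 3; 1, 1, 0, 0] : Matrix (Fin 2) (Fin 4) ℤ))) :=
  ⟨toricQuotient_not_isCohenMacaulay, initialQuotient_not_isCohenMacaulay⟩

end
end
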